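/- Let 1 < p < ∞ and p* = p/(p−1). Under the standing assumptions on (T, d, μ): if mod_{p*} T < ∞, then (cap_p T)^{1/p} · (mod_{p*} T)^{1/p*} ≤ C, where the constant C depends only on the data of T (the constants C_μ, C_P, λ_P). If mod_{p*} T = ∞, then cap_p T = 0. -/

import Mathlib

open MeasureTheory Metric Set Filter Topology
open scoped ENNReal NNReal unitInterval

noncomputable section

namespace Duality

/-! ### Rectifiable curves, line integrals and upper gradients

A rectifiable path is encoded by its arclength-type parametrization: a `1`-Lipschitz
map defined on a compact interval `[a, b]`.  The line integral `∫_γ ρ ds` of a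
nonnegative Borel function is then the Lebesgue integral of `ρ ∘ γ` over `[a, b]`. -/

structure UPath (X : Type*) [PseudoMetricSpace X] where
  a : ℝ
  b : ℝ
  hab : a ≤ b
  toFun : ℝ → X
  lip : LipschitzOnWith 1 toFun (Set.Icc a b)

namespace UPath

variable {X : Type*} [PseudoMetricSpace X]

/-- starting point of the path -/
def start (γ : UPath X) : X := γ.toFun γ.a

/-- end point of the path -/
def finish (γ : UPath X) : X := γ.toFun γ.b

/-- The line integral `∫_γ ρ ds`. -/
def integral (γ : UPath X) (ρ : X → ℝ≥0∞) : ℝ≥0∞ :=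
  ∫⁻ t in Set.Icc γ.a γ.b, ρ (γ.toFun t)

/-- The image (trace) `|γ|` of the path. -/
def trace (γ : UPath X) : Set X := γ.toFun '' Set.Icc γ.a γ.b

/-- The length of the path. -/
def length (γ : UPath X) : ℝ≥0∞ := eVariationOn γ.toFun (Set.Icc γ.a γ.b)

/-- The path stays inside the set `W`. -/
def InSet (γ : UPath X) (W : Set X) : Prop := ∀ t ∈ Set.Icc γ.a γ.b, γ.toFun t ∈ W

/-- The reparametrization of a rectifiable path as a `Path` (continuous map from `[0,1]`). -/
def toPath (γ : UPath X) : Path γ.start γ.finish where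
  toFun := fun t => γ.toFun (γ.a + (t : ℝ) * (γ.b - γ.a))
  continuous_toFun := by
    have hmem : ∀ t : unitInterval, γ.a + (t : ℝ) * (γ.b - γ.a) ∈ Set.Icc γ.a γ.b := by
      intro t
      obtain ⟨ht0, ht1⟩ := t.2
      constructor
      · nlinarith [γ.hab]
      · nlinarith [γ.hab]
    exact γ.lip.continuousOn.comp_continuous (by continuity) hmem
  source' := by simp [start]
  target' := by simp [finish]

end UPath

/-- `ρ` is an upper gradient of `u`. -/
def IsUpperGradient {X : Type*} [PseudoMetricSpace X] {Y : Type*} [PseudoEMetricSpace Y]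
    (u : X → Y) (ρ : X → ℝ≥0∞) : Prop :=
  ∀ γ : UPath X, edist (u γ.start) (u γ.finish) ≤ γ.integral ρ

/-- The `p`-modulus of a family of (rectifiable) paths. -/
def pathMod {X : Type*} [PseudoMetricSpace X] [MeasurableSpace X]
    (μ : Measure X) (p : ℝ) (Γ : Set (UPath X)) : ℝ≥0∞ :=
  ⨅ (ρ : X → ℝ≥0∞) (_ : Measurable ρ ∧ ∀ γ ∈ Γ, 1 ≤ γ.integral ρ),
    ∫⁻ x, ρ x ^ p ∂μ

/-- `ρ` is a `p`-weak upper gradient of `u`: the upper gradient inequality may fail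
only on a path family of zero `p`-modulus. -/
def IsWeakUpperGradient {X : Type*} [PseudoMetricSpace X] [MeasurableSpace X]
    {Y : Type*} [PseudoEMetricSpace Y] (μ : Measure X) (p : ℝ)
    (u : X → Y) (ρ : X → ℝ≥0∞) : Prop :=
  pathMod μ p {γ : UPath X | ¬ edist (u γ.start) (u γ.finish) ≤ γ.integral ρ} = 0

/-- `ρ` is a `p`-weak upper gradient of `u` in the subset `U`. -/
def IsWeakUpperGradientOn {X : Type*} [PseudoMetricSpace X] [MeasurableSpace X]
    {Y : Type*} [PseudoEMetricSpace Y] (μ : Measure X) (p : ℝ) (U : Set X)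
    (u : X → Y) (ρ : X → ℝ≥0∞) : Prop :=
  pathMod (μ.restrict U) p
    {γ : UPath X | γ.InSet U ∧ ¬ edist (u γ.start) (u γ.finish) ≤ γ.integral ρ} = 0

/-- `ρ` is the minimal `p`-weak upper gradient of `u`: it is a `p`-integrable `p`-weak
upper gradient which is `μ`-a.e. dominated by every other one. -/
def IsMinimalWeakUpperGradient {X : Type*} [PseudoMetricSpace X] [MeasurableSpace X]
    {Y : Type*} [PseudoEMetricSpace Y] (μ : Measure X) (p : ℝ)
    (u : X → Y) (ρ : X → ℝ≥0∞) : Prop :=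
  Measurable ρ ∧ IsWeakUpperGradient μ p u ρ ∧ (∫⁻ x, ρ x ^ p ∂μ) < ⊤ ∧
    ∀ ρ' : X → ℝ≥0∞, Measurable ρ' → IsWeakUpperGradient μ p u ρ' →
      (∫⁻ x, ρ' x ^ p ∂μ) < ⊤ → ∀ᵐ x ∂μ, ρ x ≤ ρ' x

/-! ### Doubling measures, Poincaré inequalities, Ahlfors regularity -/

/-- `μ` is a doubling (Borel) measure with doubling constant `Cμ`:
`0 < μ(2B) ≤ Cμ · μ(B) < ∞` for every ball `B` of radius `r < diam T`. -/
def IsDoubling {X : Type*} [MetricSpace X] [MeasurableSpace X]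
    (μ : Measure X) (Cμ : ℝ≥0∞) : Prop :=
  ∀ (x : X) (r : ℝ), 0 < r → r < Metric.diam (Set.univ : Set X) →
    0 < μ (ball x (2 * r)) ∧ μ (ball x (2 * r)) ≤ Cμ * μ (ball x r) ∧
      Cμ * μ (ball x r) < ⊤

/-- `(X, d, μ)` supports a weak `1`-Poincaré inequality with constants `CP`, `lP`:
`⨍_B |u - u_B| dμ ≤ CP · diam B · ⨍_{lP·B} ρ dμ` for every locally integrable `u`
and every upper gradient `ρ` of `u`, and balls have positive finite measure. -/
def SupportsPoincare {X : Type*} [MetricSpace X] [MeasurableSpace X]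
    (μ : Measure X) (CP lP : ℝ) : Prop :=
  (∀ (x : X) (r : ℝ), 0 < r → 0 < μ (ball x r) ∧ μ (ball x r) < ⊤) ∧
  ∀ (u : X → ℝ) (ρ : X → ℝ≥0∞), LocallyIntegrable u μ → Measurable ρ →
    IsUpperGradient u ρ → ∀ (x : X) (r : ℝ), 0 < r →
      (∫⁻ y in ball x r, ENNReal.ofReal |u y - ⨍ z in ball x r, u z ∂μ| ∂μ) /
          μ (ball x r) ≤
        ENNReal.ofReal (CP * Metric.diam (ball x r)) *
          ((∫⁻ y in ball x (lP * r), ρ y ∂μ) / μ (ball x (lP * r)))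

/-- `μ` is Ahlfors `q`-regular with constants `0 < aA ≤ AA`. -/
def IsAhlforsRegular {X : Type*} [MetricSpace X] [MeasurableSpace X]
    (μ : Measure X) (q aA AA : ℝ) : Prop :=
  0 < aA ∧ aA ≤ AA ∧
    ∀ (x : X) (r : ℝ), 0 < r → r < Metric.diam (Set.univ : Set X) →
      ENNReal.ofReal (aA * r ^ q) ≤ μ (ball x r) ∧
        μ (ball x r) ≤ ENNReal.ofReal (AA * r ^ q)

/-! ### The circle `ℝ/ℤ`, loops and degree -/

lemma intCast_coe_eq_zero (k : ℤ) : ((k : ℝ) : UnitAddCircle) = 0 :=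
  (AddCircle.coe_eq_zero_iff _).mpr ⟨k, by simp⟩

/-- The standard loop of degree `k` in `ℝ/ℤ` based at `y`: `t ↦ y + [k t]`. -/
def stdLoop (k : ℤ) (y : UnitAddCircle) : Path y y where
  toFun := fun t => y + (((k : ℝ) * (t : ℝ) : ℝ) : UnitAddCircle)
  continuous_toFun := by
    refine continuous_const.add ?_
    exact (AddCircle.continuous_mk' 1).comp (by continuity)
  source' := by simp
  target' := by
    have h1 : ((1 : unitInterval) : ℝ) = 1 := rfl
    have h : (((k : ℝ) * ((1 : unitInterval) : ℝ) : ℝ) : UnitAddCircle) = 0 := by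
      rw [h1, mul_one]; exact intCast_coe_eq_zero k
    simp [h]

/-- Concatenation of `n` copies of a loop. -/
def loopPow {X : Type*} [TopologicalSpace X] {x : X} (γ : Path x x) : ℕ → Path x x
  | 0 => Path.refl x
  | n + 1 => (loopPow γ n).trans γ

/-- A loop `γ` based at `x` has degree 1 (relative to the chosen generator `α₀` based
at `x₀`) if it is loop-homotopic to a conjugate `η * α₀ * η⁻¹` of `α₀`. -/
def IsDegreeOneLoop {T : Type*} [TopologicalSpace T] (x₀ : T) (α₀ : Path x₀ x₀)
    {x : T} (γ : Path x x) : Prop :=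
  ∃ η : Path x x₀, Path.Homotopic γ (η.trans (α₀.trans η.symm))

/-- A map `f : T → ℝ/ℤ` has degree `k`: it pushes every degree-1 loop based at `x`
to a loop which is loop-homotopic to `[f x] + k·β`, `β (t) = [t]`. -/
def HasDegree {T : Type*} [TopologicalSpace T] (x₀ : T) (α₀ : Path x₀ x₀)
    (f : T → UnitAddCircle) (k : ℤ) : Prop :=
  ∃ hf : Continuous f, ∀ (x : T) (γ : Path x x), IsDegreeOneLoop x₀ α₀ γ →
    Path.Homotopic (γ.map hf) (stdLoop k (f x))

/-- The class of `α₀` generates `π₁(T, x₀) ≅ ℤ`. -/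
def IsGenerator {T : Type*} [TopologicalSpace T] (x₀ : T) (α₀ : Path x₀ x₀) : Prop :=
  Function.Bijective fun k : ℤ =>
    (FundamentalGroup.fromPath (X := TopCat.of T) ⟦α₀⟧ : FundamentalGroup (TopCat.of T) x₀) ^ k

/-- `T` is semilocally simply connected. -/
def SemilocallySimplyConnected (T : Type*) [TopologicalSpace T] : Prop :=
  ∀ x : T, ∃ U ∈ 𝓝 x, ∀ γ : Path x x, (∀ t, γ t ∈ U) → Path.Homotopic γ (Path.refl x)

/-- `f` is a Lipschitz map of degree 1. -/
def DegOneLip {T : Type*} [MetricSpace T] (x₀ : T) (α₀ : Path x₀ x₀)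
    (f : T → UnitAddCircle) : Prop :=
  (∃ L : ℝ≥0, LipschitzWith L f) ∧ HasDegree x₀ α₀ f 1

/-! ### Capacity and surface modulus -/

/-- The degree 1 `p`-capacity of `T`, defined through minimal `p`-weak upper gradients:
the infimum of `∫ ρ^p dμ` over `p`-weak upper gradients `ρ` of Lipschitz degree-1 maps. -/
def cap {T : Type*} [MetricSpace T] [MeasurableSpace T] (μ : Measure T) (p : ℝ)
    (x₀ : T) (α₀ : Path x₀ x₀) : ℝ≥0∞ :=
  ⨅ (f : T → UnitAddCircle) (_ : DegOneLip x₀ α₀ f) (ρ : T → ℝ≥0∞)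
    (_ : Measurable ρ ∧ IsWeakUpperGradient μ p f ρ),
      ∫⁻ x, ρ x ^ p ∂μ

/-- The pointwise Lipschitz constant `Lip f (x)`. -/
def pLip {T : Type*} [MetricSpace T] (f : T → UnitAddCircle) (x : T) : ℝ≥0∞ :=
  Filter.limsup
    (fun r : ℝ => ⨆ y ∈ ball x r, edist (f x) (f y) / ENNReal.ofReal r) (𝓝[>] (0 : ℝ))

/-- The degree 1 `p`-capacity of `T`, defined through pointwise Lipschitz constants. -/
def capLip {T : Type*} [MetricSpace T] [MeasurableSpace T] (μ : Measure T) (p : ℝ)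
    (x₀ : T) (α₀ : Path x₀ x₀) : ℝ≥0∞ :=
  ⨅ (f : T → UnitAddCircle) (_ : DegOneLip x₀ α₀ f), ∫⁻ x, pLip f x ^ p ∂μ

/-- The codimension 1 spherical Hausdorff measure, as a set function:
`H(A) = sup_{δ>0} inf { ∑ μ(B_i)/r_i }`, the infimum being over countable covers of `A`
by balls `B_i` of radii `r_i ≤ δ`. -/
def codimH {T : Type*} [MetricSpace T] [MeasurableSpace T] (μ : Measure T)
    (A : Set T) : ℝ≥0∞ :=
  ⨆ (δ : ℝ) (_ : 0 < δ),
    ⨅ (c : ℕ → T) (r : ℕ → ℝ) (_ : ∀ i, r i ≤ δ)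
      (_ : A ⊆ ⋃ i, ball (c i) (r i)),
        ∑' i, μ (ball (c i) (r i)) / ENNReal.ofReal (r i)

/-- The integral `∫_S g dH` of `g ≥ 0` over `S` against the codimension 1 Hausdorff
measure, via the layer-cake (Choquet) formula. -/
def choquetIntegral {T : Type*} [MetricSpace T] [MeasurableSpace T] (μ : Measure T)
    (S : Set T) (g : T → ℝ≥0∞) : ℝ≥0∞ :=
  ∫⁻ t in Set.Ioi (0 : ℝ), codimH μ {x | x ∈ S ∧ ENNReal.ofReal t < g x}

/-- The family `Γ*` of all level sets `φ⁻¹[0]` of finite codimension 1 Hausdorff measure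
of continuous degree-1 maps `φ : T → ℝ/ℤ`. -/
def Surfaces {T : Type*} [MetricSpace T] [MeasurableSpace T] (μ : Measure T)
    (x₀ : T) (α₀ : Path x₀ x₀) : Set (Set T) :=
  {S | ∃ φ : T → UnitAddCircle, HasDegree x₀ α₀ φ 1 ∧ S = φ ⁻¹' {0} ∧ codimH μ S < ⊤}

/-- The surface `q`-modulus of a family of surfaces, the surfaces being equipped with the
codimension 1 Hausdorff measure. -/
def surfModOf {T : Type*} [MetricSpace T] [MeasurableSpace T] (μ : Measure T) (q : ℝ)
    (𝒮 : Set (Set T)) : ℝ≥0∞ :=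
  ⨅ (ρ : T → ℝ≥0∞) (_ : Measurable ρ ∧ ∀ S ∈ 𝒮, 1 ≤ choquetIntegral μ S ρ),
    ∫⁻ x, ρ x ^ q ∂μ

/-- The surface modulus `mod_q T`. -/
def surfMod {T : Type*} [MetricSpace T] [MeasurableSpace T] (μ : Measure T) (q : ℝ)
    (x₀ : T) (α₀ : Path x₀ x₀) : ℝ≥0∞ :=
  surfModOf μ q (Surfaces μ x₀ α₀)

/-- The family `Γ*` with the `(q-1)`-dimensional Hausdorff measure instead. -/
def SurfacesH {T : Type*} [MetricSpace T] [MeasurableSpace T] [BorelSpace T] (q : ℝ)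
    (x₀ : T) (α₀ : Path x₀ x₀) : Set (Set T) :=
  {S | ∃ φ : T → UnitAddCircle, HasDegree x₀ α₀ φ 1 ∧ S = φ ⁻¹' {0} ∧ μH[q - 1] S < ⊤}

/-- The surface modulus `mod_q T` defined through the `(q-1)`-dimensional Hausdorff
measures `H^{q-1} ⌞ S`, `S ∈ Γ*`. -/
def surfModH {T : Type*} [MetricSpace T] [MeasurableSpace T] [BorelSpace T]
    (μ : Measure T) (q pstar : ℝ) (x₀ : T) (α₀ : Path x₀ x₀) : ℝ≥0∞ :=
  ⨅ (ρ : T → ℝ≥0∞)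
    (_ : Measurable ρ ∧ ∀ S ∈ SurfacesH (T := T) q x₀ α₀, 1 ≤ ∫⁻ x in S, ρ x ∂μH[q - 1]),
      ∫⁻ x, ρ x ^ pstar ∂μ

/-- The standing assumptions 2.1. -/
def Standing {T : Type*} [MetricSpace T] [MeasurableSpace T] (μ : Measure T)
    (Cμ : ℝ≥0∞) (CP lP : ℝ) (x₀ : T) (α₀ : Path x₀ x₀) : Prop :=
  IsDoubling μ Cμ ∧ SupportsPoincare μ CP lP ∧ SemilocallySimplyConnected T ∧
    IsGenerator x₀ α₀ ∧ ∃ f : T → UnitAddCircle, DegOneLip x₀ α₀ f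

/-! ### The universal cover -/

/-- `π` is a local isometry. -/
def IsLocalIsometry {X Y : Type*} [MetricSpace X] [MetricSpace Y] (π : X → Y) : Prop :=
  ∀ x : X, ∃ ε : ℝ, 0 < ε ∧
    ∀ y ∈ ball x ε, ∀ z ∈ ball x ε, dist (π y) (π z) = dist y z

/-- `(T̃, π)` is the universal cover of `T`, with `T̃` carrying the length metric pulled
back by `π` (so that `π` is a local isometry). -/
def CoverSetup {T Tt : Type*} [MetricSpace T] [MetricSpace Tt] (π : Tt → T) : Prop :=
  IsCoveringMap π ∧ Function.Surjective π ∧ IsLocalIsometry π ∧ SimplyConnectedSpace Tt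

/-- `τ` is the deck transformation of the cover `π` determined by
`τ (γ̃ 0) = γ̃ 1` for every lift `γ̃` of every degree-1 loop `γ`. -/
def IsDeck {T Tt : Type*} [MetricSpace T] [MetricSpace Tt] (π : Tt → T)
    (x₀ : T) (α₀ : Path x₀ x₀) (τ : Tt → Tt) : Prop :=
  Continuous τ ∧ (∀ x, π (τ x) = π x) ∧
    ∀ (x : T) (γ : Path x x), IsDegreeOneLoop x₀ α₀ γ →
      ∀ γt : C(unitInterval, Tt), (∀ t, π (γt t) = γ t) → τ (γt 0) = γt 1

/-- `μ̃` is the natural lift of `μ` to the cover: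
`μ̃ (A) = ∫ #(π⁻¹(x) ∩ A) dμ (x)`. -/
def IsLiftedMeasure {T Tt : Type*} [MetricSpace T] [MeasurableSpace T]
    [MetricSpace Tt] [MeasurableSpace Tt] (π : Tt → T) (μ : Measure T)
    (μt : Measure Tt) : Prop :=
  ∀ A : Set Tt, MeasurableSet A → μt A = ∫⁻ x, ((π ⁻¹' {x} ∩ A).encard : ℝ≥0∞) ∂μ

/-! ### Newtonian spaces -/

/-- The seminorm of `N^{1,p}(U)`. -/
def NSeminorm {X : Type*} [PseudoMetricSpace X] [MeasurableSpace X] (μ : Measure X)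
    (p : ℝ) (U : Set X) (f : X → ℝ) : ℝ≥0∞ :=
  (∫⁻ x in U, ENNReal.ofReal |f x| ^ p ∂μ) ^ (1 / p) +
    ⨅ (ρ : X → ℝ≥0∞) (_ : Measurable ρ ∧ IsWeakUpperGradientOn μ p U f ρ),
      (∫⁻ x in U, ρ x ^ p ∂μ) ^ (1 / p)

/-- `f ∈ N^{1,p}_loc`. -/
def MemNloc {X : Type*} [PseudoMetricSpace X] [MeasurableSpace X] (μ : Measure X)
    (p : ℝ) (f : X → ℝ) : Prop :=
  ∀ U : Set X, IsOpen U → IsCompact (closure U) →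
    (∫⁻ x in U, ENNReal.ofReal |f x| ^ p ∂μ) < ⊤ ∧
      ∃ ρ : X → ℝ≥0∞, Measurable ρ ∧ IsWeakUpperGradientOn μ p U f ρ ∧
        (∫⁻ x in U, ρ x ^ p ∂μ) < ⊤

/-- The collection `F`: nonnegative Borel functions `ρ` on `T` such that `ρ ∘ π` is a
`p`-weak upper gradient of some `f ∈ N^{1,p}_loc (T̃)` with `f ∘ τ - f = 1` a.e. -/
def MemF {T Tt : Type*} [MetricSpace T] [MeasurableSpace T] [MetricSpace Tt]
    [MeasurableSpace Tt] (π : Tt → T) (τ : Tt → Tt) (μt : Measure Tt) (p : ℝ)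
    (ρ : T → ℝ≥0∞) : Prop :=
  Measurable ρ ∧ ∃ f : Tt → ℝ, MemNloc μt p f ∧ (∀ᵐ x ∂μt, f (τ x) - f x = 1) ∧
    IsWeakUpperGradient μt p f (ρ ∘ π)

/-- The capacity `cap_p^F T`. -/
def capF {T Tt : Type*} [MetricSpace T] [MeasurableSpace T] [MetricSpace Tt]
    [MeasurableSpace Tt] (μ : Measure T) (π : Tt → T) (τ : Tt → Tt) (μt : Measure Tt)
    (p : ℝ) : ℝ≥0∞ :=
  ⨅ (ρ : T → ℝ≥0∞) (_ : MemF π τ μt p ρ), ∫⁻ x, ρ x ^ p ∂μ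

/-! ### Miscellaneous operators -/

/-- The restricted Hardy–Littlewood maximal operator `M_R`. -/
def restrMax {T : Type*} [MetricSpace T] [MeasurableSpace T] (μ : Measure T)
    (R : ℝ≥0∞) (g : T → ℝ≥0∞) (x : T) : ℝ≥0∞ :=
  ⨆ (s : ℝ) (_ : 0 < s ∧ ENNReal.ofReal s ≤ R),
    (∫⁻ y in ball x s, g y ∂μ) / μ (ball x s)

/-- The upper Lebesgue integral. -/
def upperLintegral {Y : Type*} [MeasurableSpace Y] (ν : Measure Y)
    (F : Y → ℝ≥0∞) : ℝ≥0∞ :=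
  ⨅ (G : Y → ℝ≥0∞) (_ : Measurable G ∧ ∀ y, F y ≤ G y), ∫⁻ y, G y ∂ν

/-! ### The sets `Ω` and the functions `ψ̃`, `ζ`, `ψ` of Section 4.3 -/

/-- The set of points reachable from `A` by a rectifiable path inside `W`. -/
def reach {T : Type*} [MetricSpace T] (A W : Set T) : Set T :=
  {x | ∃ γ : UPath T, γ.start ∈ A ∧ γ.finish = x ∧ γ.InSet W}

/-- `inf_γ ∫_γ ρ ds` over rectifiable paths connecting `A` to `x` inside `W`. -/
def pathDist {T : Type*} [MetricSpace T] (ρ : T → ℝ≥0∞) (A W : Set T) (x : T) : ℝ≥0∞ :=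
  ⨅ (γ : UPath T) (_ : γ.start ∈ A ∧ γ.finish = x ∧ γ.InSet W), γ.integral ρ

open scoped Classical in
/-- The function `ψ̃`. -/
def psiTilde {T : Type*} [MetricSpace T] (ρ : T → ℝ≥0∞) (A W : Set T) (x : T) : ℝ :=
  if x ∈ reach A W then (pathDist ρ A W x).toReal else 0

/-- The function `min {1, ψ̃}`. -/
def zeta {T : Type*} [MetricSpace T] (ρ : T → ℝ≥0∞) (A W : Set T) (x : T) : ℝ :=
  min 1 (psiTilde ρ A W x)

/-- The competing admissible map `ψ = [min {1, ψ̃}] : T → ℝ/ℤ`. -/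
def psiMap {T : Type*} [MetricSpace T] (ρ : T → ℝ≥0∞) (A W : Set T) (x : T) :
    UnitAddCircle :=
  ((zeta ρ A W x : ℝ) : UnitAddCircle)

end Duality

/-!
A capacity bound from below produces an admissible density for the surfaces by finite-dimensional
duality. Fix a Lipschitz map `f` of degree `1` and a net `z` at a small scale `ε`. If `f + v`, with
`v` real valued, is `a z`-Lipschitz around each point of `B(z, ε)`, then `∑ a z 1_{B(z, ε)}` is an
upper gradient of a map of degree `1`, so `∑ μ(B(z, ε)) a z ^ p` is bounded below by the capacity.
These slopes form a convex set, and its point of least weighted `ℓᵖ` norm gives dual weights `b`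
with `1 ≤ ∑ μ(B(z, ε)) b z a z` for all slopes and with controlled `ℓ^q` norm.

A surface `φ⁻¹(0)` covered by finitely many small balls `Bᵢ` of radii `rᵢ` yields slopes in turn:
collapsing the complement of the cover to a point turns `φ` into a map `f + v` of degree `1` with
upper gradient `∑ rᵢ⁻¹ 1_{3Bᵢ}`, and averaging `v` at scale `ε` gives, by the Poincaré inequality,
slopes bounded by means of this density. Testing them against `b` bounds
`∑ μ(Bᵢ) / rᵢ * g(yᵢ)`, `yᵢ ∈ Bᵢ`, from below for a multiple `g` of `∑ b z 1_{B(z, R)}` with `R`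
comparable to `ε`. As the cover was arbitrary, the integral of `g` over the surface is at least `1`,
and the modulus is at most `∫ g ^ q`.
-/

namespace Duality

/-! ### Maps of degree `k` to the circle -/

section Degree

variable {T : Type*} [TopologicalSpace T] {x₀ : T} {α₀ : Path x₀ x₀}

lemma homotopic_map_prod {X Y Z : Type*} [TopologicalSpace X] [TopologicalSpace Y]
    [TopologicalSpace Z] {x x' : X} {y y' : Y} {p p' : Path x x'} {q q' : Path y y'}
    (hp : p.Homotopic p') (hq : q.Homotopic q') {F : X × Y → Z} (hF : Continuous F) :
    ((p.prod q).map hF).Homotopic ((p'.prod q').map hF) := by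
  obtain ⟨P⟩ := hp
  obtain ⟨Q⟩ := hq
  exact ⟨(Path.Homotopic.prodHomotopy P Q).map ⟨F, hF⟩⟩

lemma isDegreeOneLoop_self : IsDegreeOneLoop x₀ α₀ α₀ :=
  ⟨Path.refl x₀, ⟨((Path.Homotopy.reflTrans _).trans
    (by simpa only [Path.refl_symm] using Path.Homotopy.transRefl α₀)).symm⟩⟩

lemma HasDegree.add_coe {f : T → UnitAddCircle} {k : ℤ} (hf : HasDegree x₀ α₀ f k)
    {v : T → ℝ} (hv : Continuous v) :
    HasDegree x₀ α₀ (fun x => f x + (v x : UnitAddCircle)) k := by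
  obtain ⟨hfc, h⟩ := hf
  have hF : Continuous fun q : UnitAddCircle × ℝ => q.1 + (q.2 : UnitAddCircle) :=
    continuous_fst.add ((AddCircle.continuous_mk' 1).comp continuous_snd)
  refine ⟨hF.comp (hfc.prodMk hv), fun x γ hγ => ?_⟩
  have hvγ : (γ.map hv).Homotopic (Path.refl (v x)) :=
    SimplyConnectedSpace.paths_homotopic _ _
  have hstd : stdLoop k (f x + (v x : UnitAddCircle)) =
      ((stdLoop k (f x)).prod (Path.refl (v x))).map hF := by
    ext t
    simp [stdLoop, add_right_comm]
  rw [hstd]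
  exact homotopic_map_prod (h x γ hγ) hvγ hF

lemma HasDegree.homotopic_map_sub {φ f : T → UnitAddCircle} {k : ℤ}
    (hφ : HasDegree x₀ α₀ φ k) (hf : HasDegree x₀ α₀ f k) {x : T} {γ : Path x x}
    (hγ : IsDegreeOneLoop x₀ α₀ γ) :
    (γ.map (hφ.1.sub hf.1)).Homotopic (Path.refl (φ x - f x)) := by
  have hsub : Continuous fun q : UnitAddCircle × UnitAddCircle => q.1 - q.2 := by fun_prop
  have hstd : Path.refl (φ x - f x) =
      ((stdLoop k (φ x)).prod (stdLoop k (f x))).map hsub := by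
    ext t
    simp [stdLoop]
  rw [hstd]
  exact homotopic_map_prod (hφ.2 x γ hγ) (hf.2 x γ hγ) hsub

lemma IsGenerator.exists_lift [PathConnectedSpace T] [LocallyPathConnectedSpace T]
    (hα : IsGenerator x₀ α₀) (g : C(T, UnitAddCircle))
    (hg : (α₀.map g.continuous).Homotopic (Path.refl (g x₀))) :
    ∃ w : C(T, ℝ), ∀ x, (w x : UnitAddCircle) = g x := by
  obtain ⟨e₀, he₀⟩ : ∃ e₀ : ℝ, (e₀ : UnitAddCircle) = g x₀ :=
    QuotientAddGroup.mk_surjective (g x₀)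
  have hmap_gen : FundamentalGroup.map g x₀ (FundamentalGroup.fromPath ⟦α₀⟧) = 1 := by
    rw [FundamentalGroup.map_apply]
    exact congrArg FundamentalGroup.fromPath (Quotient.sound hg)
  have hmap : ∀ a, FundamentalGroup.map g x₀ a = 1 := by
    intro a
    obtain ⟨n, rfl⟩ := hα.2 a
    exact (map_zpow (FundamentalGroup.map g x₀) (FundamentalGroup.fromPath ⟦α₀⟧) n).trans
      ((congrArg (· ^ n) hmap_gen).trans (one_zpow n))
  obtain ⟨w, ⟨-, hw⟩, -⟩ :=
    (AddCircle.isCoveringMap_coe (1 : ℝ)).existsUnique_continuousMap_lifts_of_range_le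
      (f := g) he₀ (by rintro _ ⟨a, rfl⟩; rw [hmap a]; exact one_mem _)
  exact ⟨w, congrFun hw⟩

lemma IsGenerator.exists_lift_sub [PathConnectedSpace T] [LocallyPathConnectedSpace T]
    (hα : IsGenerator x₀ α₀) {φ f : T → UnitAddCircle} {k : ℤ} (hφ : HasDegree x₀ α₀ φ k)
    (hf : HasDegree x₀ α₀ f k) : ∃ w : C(T, ℝ), ∀ x, (w x : UnitAddCircle) = φ x - f x :=
  hα.exists_lift ⟨_, hφ.1.sub hf.1⟩ (hφ.homotopic_map_sub hf isDegreeOneLoop_self)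

end Degree

/-! ### Upper gradients from local estimates -/

section UpperGradient

variable {Y : Type*} [PseudoEMetricSpace Y]

lemma edist_le_lintegral_Ioc_of_forall {v : ℝ → Y} {ρ : ℝ → ℝ≥0∞} {s t : ℝ} (hst : s ≤ t)
    (hs : ∀ τ ∈ Ioc s t, edist (v τ) (v s) ≤ ρ τ * edist τ s)
    (ht : ∀ τ ∈ Ioc s t, edist (v τ) (v t) ≤ ρ τ * edist τ t) :
    edist (v s) (v t) ≤ ∫⁻ τ in Ioc s t, ρ τ := by
  rcases hst.eq_or_lt with rfl | hst
  · simp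
  have hdiv : ∀ τ ∈ Ioc s t, edist (v s) (v t) / ENNReal.ofReal (t - s) ≤ ρ τ := by
    intro τ hτ
    apply ENNReal.div_le_of_le_mul
    calc edist (v s) (v t)
        ≤ edist (v τ) (v s) + edist (v τ) (v t) := edist_triangle_left _ _ _
      _ ≤ ρ τ * (edist τ s + edist τ t) := by
          rw [mul_add]; exact add_le_add (hs τ hτ) (ht τ hτ)
      _ = ρ τ * ENNReal.ofReal (t - s) := by
          rw [edist_dist, edist_dist, ← ENNReal.ofReal_add dist_nonneg dist_nonneg,
            Real.dist_eq, Real.dist_eq, abs_of_pos (sub_pos.2 hτ.1),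
            abs_of_nonpos (sub_nonpos.2 hτ.2)]
          congr 2; ring
  calc edist (v s) (v t)
      = edist (v s) (v t) / ENNReal.ofReal (t - s) * ENNReal.ofReal (t - s) := by
        rw [ENNReal.div_mul_cancel (by simpa using hst) ENNReal.ofReal_ne_top]
    _ = ∫⁻ _ in Ioc s t, edist (v s) (v t) / ENNReal.ofReal (t - s) := by
        rw [setLIntegral_const, Real.volume_Ioc]
    _ ≤ ∫⁻ τ in Ioc s t, ρ τ := setLIntegral_mono' measurableSet_Ioc hdiv

lemma edist_le_lintegral_Ioc_of_local {v : ℝ → Y} {ρ : ℝ → ℝ≥0∞} {a b ε : ℝ} (hab : a ≤ b)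
    (hε : 0 < ε)
    (h : ∀ s ∈ Icc a b, ∀ t ∈ Icc a b, dist s t < ε → edist (v s) (v t) ≤ ρ s * edist s t) :
    edist (v a) (v b) ≤ ∫⁻ τ in Ioc a b, ρ τ := by
  have hshort : ∀ s t, a ≤ s → s ≤ t → t ≤ b → t - s ≤ ε / 2 →
      edist (v s) (v t) ≤ ∫⁻ τ in Ioc s t, ρ τ := by
    intro s t has hst htb hlt
    refine edist_le_lintegral_Ioc_of_forall hst (fun τ hτ => ?_) fun τ hτ => ?_
    all_goals
      refine h _ ⟨by linarith [hτ.1], hτ.2.trans htb⟩ _ ⟨by linarith, by linarith⟩ ?_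
      rw [Real.dist_eq, abs_lt]
      constructor <;> linarith [hτ.1, hτ.2]
  have hchain : ∀ (n : ℕ) (t : ℝ), a ≤ t → t ≤ b → t - a ≤ n * (ε / 2) →
      edist (v a) (v t) ≤ ∫⁻ τ in Ioc a t, ρ τ := by
    intro n
    induction n with
    | zero =>
      intro t hat _ hlt
      obtain rfl : a = t := le_antisymm hat (by simpa using hlt)
      simp
    | succ n ih =>
      intro t hat htb hlt
      push_cast at hlt
      have has : a ≤ max a (t - ε / 2) := le_max_left _ _
      have hst : max a (t - ε / 2) ≤ t := max_le hat (by linarith)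
      rw [← Ioc_union_Ioc_eq_Ioc has hst,
        lintegral_union measurableSet_Ioc (Ioc_disjoint_Ioc_of_le le_rfl)]
      refine (edist_triangle _ (v (max a (t - ε / 2))) _).trans (add_le_add ?_ ?_)
      · refine ih _ has (hst.trans htb) (sub_le_iff_le_add.2 (max_le ?_ ?_))
        · have : 0 ≤ (n : ℝ) * (ε / 2) := by positivity
          linarith
        · linarith
      · exact hshort _ _ has hst htb (by linarith [le_max_right a (t - ε / 2)])
  obtain ⟨n, hn⟩ := exists_nat_ge ((b - a) / (ε / 2))
  exact hchain n b hab le_rfl ((div_le_iff₀ (half_pos hε)).1 hn)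

lemma isUpperGradient_of_local {X : Type*} [PseudoMetricSpace X] {u : X → Y} {ρ : X → ℝ≥0∞}
    {ε : ℝ} (hε : 0 < ε)
    (h : ∀ x x', dist x x' < ε → edist (u x) (u x') ≤ ρ x * edist x x') :
    IsUpperGradient u ρ := by
  intro γ
  refine (edist_le_lintegral_Ioc_of_local (v := u ∘ γ.toFun) (ρ := ρ ∘ γ.toFun) γ.hab hε
    fun s hs t ht hst => ?_).trans (lintegral_mono_set Ioc_subset_Icc_self)
  have hlip : edist (γ.toFun s) (γ.toFun t) ≤ edist s t := by simpa using γ.lip hs ht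
  refine (h _ _ (lt_of_le_of_lt ?_ hst)).trans (mul_le_mul' le_rfl hlip)
  rwa [edist_dist, edist_dist, ENNReal.ofReal_le_ofReal_iff dist_nonneg] at hlip

end UpperGradient

/-! ### Doubling measures with a Poincaré inequality -/

lemma diam_pos_of_isGenerator {T : Type*} [MetricSpace T] [CompactSpace T] {x₀ : T}
    {α₀ : Path x₀ x₀} (h : IsGenerator x₀ α₀) : 0 < diam (univ : Set T) := by
  by_contra hD
  have hsub : Subsingleton T := by
    by_contra hT
    exact hD (diam_pos (nontrivial_univ_iff.2 (not_subsingleton_iff_nontrivial.1 hT))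
      isCompact_univ.isBounded)
  obtain rfl : α₀ = Path.refl x₀ := by ext t; exact Subsingleton.elim _ _
  have h01 : (0 : ℤ) = 1 := h.1 (by
    simp only [zpow_zero, zpow_one]
    rfl)
  omega

section DoublingPoincare

variable {T : Type*} [MetricSpace T] [MeasurableSpace T] {μ : Measure T} {M C : ℝ} {k : ℕ}

/-- Doubling with constant `M` and the weak `1`-Poincaré inequality with dilation factor `2 ^ k`,
at all scales and normalised for real-valued arithmetic: the mean of `u` is replaced by an
unspecified constant and `C` absorbs the comparison of the measures of the two balls. -/
structure DoublingPoincare (μ : Measure T) (M C : ℝ) (k : ℕ) : Prop where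
  one_le : 1 ≤ M
  nonneg : 0 ≤ C
  finite : IsFiniteMeasure μ
  pos : ∀ (x : T) (r : ℝ), 0 < r → 0 < μ.real (ball x r)
  doubling : ∀ (x : T) (r : ℝ), 0 < r → μ.real (ball x (2 * r)) ≤ M * μ.real (ball x r)
  poincare : ∀ (u : T → ℝ) (ρ : T → ℝ≥0∞), Integrable u μ → Measurable ρ →
    IsUpperGradient u ρ → ∀ (x : T) (r : ℝ), 0 < r → ∃ c : ℝ,
      ∫⁻ y in ball x r, ENNReal.ofReal |u y - c| ∂μ ≤
        ENNReal.ofReal (C * r) * ∫⁻ y in ball x (2 ^ k * r), ρ y ∂μ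

lemma measureReal_ball_two_pow_mul_le (hM : 0 ≤ M)
    (h : ∀ (x : T) (r : ℝ), 0 < r → μ.real (ball x (2 * r)) ≤ M * μ.real (ball x r))
    (n : ℕ) (x : T) {r : ℝ} (hr : 0 < r) :
    μ.real (ball x (2 ^ n * r)) ≤ M ^ n * μ.real (ball x r) := by
  induction n with
  | zero => simp
  | succ n ih =>
    calc μ.real (ball x (2 ^ (n + 1) * r)) = μ.real (ball x (2 * (2 ^ n * r))) := by ring_nf
      _ ≤ M * μ.real (ball x (2 ^ n * r)) := h x _ (by positivity)
      _ ≤ M * (M ^ n * μ.real (ball x r)) := by gcongr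
      _ = M ^ (n + 1) * μ.real (ball x r) := by ring

lemma SupportsPoincare.isFiniteMeasure [CompactSpace T] {CP lP : ℝ}
    (h : SupportsPoincare μ CP lP) : IsFiniteMeasure μ := by
  have : IsLocallyFiniteMeasure μ :=
    ⟨fun x => ⟨ball x 1, ball_mem_nhds x one_pos, (h.1 x 1 one_pos).2⟩⟩
  infer_instance

lemma IsDoubling.measureReal_ball_two_mul_le [CompactSpace T] [IsFiniteMeasure μ] {Cμ : ℝ≥0∞}
    (h : IsDoubling μ Cμ) (hD : 0 < diam (univ : Set T)) (x : T) {r : ℝ} (hr : 0 < r) :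
    μ.real (ball x (2 * r)) ≤ max 1 Cμ.toReal * μ.real (ball x r) := by
  have hsmall : ∀ s, 0 < s → s < diam (univ : Set T) →
      μ.real (ball x (2 * s)) ≤ max 1 Cμ.toReal * μ.real (ball x s) := by
    intro s hs hsD
    obtain ⟨-, hle, htop⟩ := h x s hs hsD
    have hreal := ENNReal.toReal_mono htop.ne hle
    rw [ENNReal.toReal_mul] at hreal
    exact hreal.trans (mul_le_mul_of_nonneg_right (le_max_right _ _) measureReal_nonneg)
  rcases lt_or_ge r (diam (univ : Set T)) with hrD | hrD
  · exact hsmall r hr hrD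
  · calc μ.real (ball x (2 * r)) ≤ μ.real (ball x (2 * (3 / 4 * diam (univ : Set T)))) := by
          refine measureReal_mono fun y _ => ?_
          have := dist_le_diam_of_mem isCompact_univ.isBounded (mem_univ y) (mem_univ x)
          rw [mem_ball]
          linarith
      _ ≤ max 1 Cμ.toReal * μ.real (ball x (3 / 4 * diam (univ : Set T))) :=
          hsmall _ (by linarith) (by linarith)
      _ ≤ max 1 Cμ.toReal * μ.real (ball x r) :=
          mul_le_mul_of_nonneg_left (measureReal_mono (ball_subset_ball (by linarith)))
            (by positivity)

lemma SupportsPoincare.lintegral_abs_sub_average_le [IsFiniteMeasure μ] {CP lP : ℝ}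
    (h : SupportsPoincare μ CP lP) (hM : 0 ≤ M)
    (hdbl : ∀ (x : T) (r : ℝ), 0 < r → μ.real (ball x (2 * r)) ≤ M * μ.real (ball x r))
    (hk : max lP lP⁻¹ ≤ 2 ^ k) {u : T → ℝ} {ρ : T → ℝ≥0∞} (hu : LocallyIntegrable u μ)
    (hρ : Measurable ρ) (hug : IsUpperGradient u ρ) (x : T) {r : ℝ} (hr : 0 < r) :
    ∫⁻ y in ball x r, ENNReal.ofReal |u y - ⨍ z in ball x r, u z ∂μ| ∂μ ≤
      ENNReal.ofReal (max CP 0 * 2 * M ^ k * r) * ∫⁻ y in ball x (2 ^ k * r), ρ y ∂μ := by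
  obtain ⟨hball, hP⟩ := h
  have hP' := hP u ρ hu hρ hug x r hr
  rw [ENNReal.div_le_iff (hball x r hr).1.ne' (hball x r hr).2.ne] at hP'
  refine hP'.trans ?_
  rcases le_or_gt lP 0 with hl | hl
  · have : ball x (lP * r) = ∅ := ball_eq_empty.2 (mul_nonpos_of_nonpos_of_nonneg hl hr.le)
    simp [this]
  have hlr : 0 < lP * r := by positivity
  have hratio : μ (ball x r) ≤ ENNReal.ofReal (M ^ k) * μ (ball x (lP * r)) := by
    have hkl : 1 ≤ 2 ^ k * lP := (inv_le_iff_one_le_mul₀ hl).1 ((le_max_right _ _).trans hk)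
    rw [← ofReal_measureReal, ← ofReal_measureReal, ← ENNReal.ofReal_mul (by positivity)]
    exact ENNReal.ofReal_le_ofReal <|
      (measureReal_mono (ball_subset_ball (by nlinarith))).trans
        (measureReal_ball_two_pow_mul_le hM hdbl k x hlr)
  calc ENNReal.ofReal (CP * diam (ball x r)) *
        ((∫⁻ y in ball x (lP * r), ρ y ∂μ) / μ (ball x (lP * r))) * μ (ball x r)
      ≤ ENNReal.ofReal (max CP 0 * (2 * r)) *
        ((∫⁻ y in ball x (lP * r), ρ y ∂μ) / μ (ball x (lP * r))) *
          (ENNReal.ofReal (M ^ k) * μ (ball x (lP * r))) := by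
        gcongr
        · exact le_max_left _ _
        · exact diam_ball hr.le
    _ = ENNReal.ofReal (max CP 0 * (2 * r)) * ENNReal.ofReal (M ^ k) *
        ((∫⁻ y in ball x (lP * r), ρ y ∂μ) / μ (ball x (lP * r)) * μ (ball x (lP * r))) := by
        ring
    _ = ENNReal.ofReal (max CP 0 * 2 * M ^ k * r) * ∫⁻ y in ball x (lP * r), ρ y ∂μ := by
        rw [ENNReal.div_mul_cancel (hball x _ hlr).1.ne' (hball x _ hlr).2.ne,
          ← ENNReal.ofReal_mul (by positivity)]
        ring_nf
    _ ≤ _ := by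
        gcongr
        exact (le_max_left _ _).trans hk

lemma doublingPoincare_of_isDoubling [CompactSpace T] {Cμ : ℝ≥0∞} {CP lP : ℝ}
    (hD : IsDoubling μ Cμ) (hP : SupportsPoincare μ CP lP) (hdiam : 0 < diam (univ : Set T))
    (hk : max lP lP⁻¹ ≤ 2 ^ k) :
    DoublingPoincare μ (max 1 Cμ.toReal) (max CP 0 * 2 * max 1 Cμ.toReal ^ k) k := by
  have hfin := hP.isFiniteMeasure
  have hdbl := fun x r hr => hD.measureReal_ball_two_mul_le (r := r) hdiam x hr
  refine ⟨le_max_left _ _, by positivity, hfin, fun x r hr => ?_, hdbl,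
    fun u ρ hu hρ hug x r hr => ⟨_, hP.lintegral_abs_sub_average_le (by positivity) hdbl hk
      hu.locallyIntegrable hρ hug x hr⟩⟩
  exact ENNReal.toReal_pos (hP.1 x r hr).1.ne' (measure_ne_top _ _)

namespace DoublingPoincare

lemma doubling_pow (h : DoublingPoincare μ M C k) (n : ℕ) (x : T) {r : ℝ} (hr : 0 < r) :
    μ.real (ball x (2 ^ n * r)) ≤ M ^ n * μ.real (ball x r) :=
  measureReal_ball_two_pow_mul_le (zero_le_one.trans h.one_le) h.doubling n x hr

open scoped Classical in
lemma exists_lintegral_abs_sub_le_of_local [BorelSpace T] (h : DoublingPoincare μ M C k)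
    {u : T → ℝ} {ρ : T → ℝ≥0∞} (hu : Integrable u μ) (hρ : Measurable ρ) {ε : ℝ} (hε : 0 < ε)
    {z : T} {r : ℝ} (hr : 0 < r)
    (hloc : ∀ x ∈ ball z (2 ^ k * r), ∀ x', dist x x' < ε →
      edist (u x) (u x') ≤ ρ x * edist x x') :
    ∃ c : ℝ, ∫⁻ y in ball z r, ENNReal.ofReal |u y - c| ∂μ ≤
      ENNReal.ofReal (C * r) * ∫⁻ y in ball z (2 ^ k * r), ρ y ∂μ := by
  set B := ball z (2 ^ k * r)
  have hug : IsUpperGradient u (B.piecewise ρ fun _ => ⊤) := by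
    refine isUpperGradient_of_local hε fun x x' hd => ?_
    by_cases hx : x ∈ B
    · rw [piecewise_eq_of_mem _ _ _ hx]
      exact hloc x hx x' hd
    · rw [piecewise_eq_of_notMem _ _ _ hx]
      rcases eq_or_ne x x' with rfl | hne
      · simp
      · rw [ENNReal.top_mul (edist_pos.2 hne).ne']
        exact le_top
  obtain ⟨c, hc⟩ := h.poincare u _ hu (hρ.piecewise measurableSet_ball measurable_const) hug z r hr
  refine ⟨c, hc.trans_eq ?_⟩
  rw [setLIntegral_congr_fun measurableSet_ball fun y hy => piecewise_eq_of_mem B _ _ hy]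

lemma abs_sub_le_of_ball_subset [OpensMeasurableSpace T] (h : DoublingPoincare μ M C k)
    {u : T → ℝ} {x z : T} {c r s e : ℝ} {n : ℕ} (hr : 0 ≤ r) (hs : 0 < s)
    (hc : ∫⁻ y in ball x r, ENNReal.ofReal |u y - c| ∂μ ≤
      ENNReal.ofReal (C * r) * μ (ball x (2 ^ k * r)))
    (hsub : ball z s ⊆ ball x r) (hsup : ball x (2 ^ k * r) ⊆ ball z (2 ^ n * s))
    (hu : ∀ y ∈ ball z s, |u y - u z| ≤ e) : |u z - c| ≤ e + C * r * M ^ n := by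
  have := h.finite
  have hCr : 0 ≤ C * r := mul_nonneg h.nonneg hr
  have hpos := h.pos z s hs
  have hlow : ENNReal.ofReal (|u z - c| - e) * μ (ball z s) ≤
      ENNReal.ofReal (C * r) * μ (ball x (2 ^ k * r)) := by
    calc ENNReal.ofReal (|u z - c| - e) * μ (ball z s)
        = ∫⁻ _ in ball z s, ENNReal.ofReal (|u z - c| - e) ∂μ := (setLIntegral_const _ _).symm
      _ ≤ ∫⁻ y in ball z s, ENNReal.ofReal |u y - c| ∂μ := by
          refine setLIntegral_mono' measurableSet_ball fun y hy => ENNReal.ofReal_le_ofReal ?_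
          have := abs_sub_le (u z) (u y) c
          rw [abs_sub_comm (u z) (u y)] at this
          linarith [hu y hy]
      _ ≤ ∫⁻ y in ball x r, ENNReal.ofReal |u y - c| ∂μ := lintegral_mono_set hsub
      _ ≤ _ := hc
  have hdbl : μ.real (ball x (2 ^ k * r)) ≤ M ^ n * μ.real (ball z s) :=
    (measureReal_mono hsup).trans (h.doubling_pow n z hs)
  rw [← ofReal_measureReal, ← ofReal_measureReal, ← ENNReal.ofReal_mul' hpos.le,
    ← ENNReal.ofReal_mul hCr, ENNReal.ofReal_le_ofReal_iff (by positivity)] at hlow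
  have hchain : (|u z - c| - e) * μ.real (ball z s) ≤ C * r * M ^ n * μ.real (ball z s) :=
    hlow.trans
    ((mul_le_mul_of_nonneg_left hdbl hCr).trans_eq (mul_assoc _ _ _).symm)
  linarith [le_of_mul_le_mul_right hchain hpos]

end DoublingPoincare

end DoublingPoincare

/-! ### Quasiconvexity and path connectedness -/

section Quasiconvexity

lemma locallyLipschitz_of_local {X Y : Type*} [PseudoMetricSpace X] [PseudoEMetricSpace Y]
    {u : X → Y} {L : ℝ≥0} {ε : ℝ} (hε : 0 < ε)
    (hu : ∀ x y, dist x y < ε → edist (u x) (u y) ≤ L * edist x y) : LocallyLipschitz u :=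
  fun x => ⟨L, ball x (ε / 2), ball_mem_nhds x (half_pos hε), fun y hy z hz => hu y z <| by
    linarith [dist_triangle_right y z x, mem_ball.1 hy, mem_ball.1 hz]⟩

lemma exists_lipschitzWith_of_local {X Y : Type*} [PseudoMetricSpace X] [CompactSpace X]
    [PseudoMetricSpace Y] {u : X → Y} {L : ℝ≥0} {ε : ℝ} (hε : 0 < ε)
    (hu : ∀ x y, dist x y < ε → edist (u x) (u y) ≤ L * edist x y) :
    ∃ K : ℝ≥0, LipschitzWith K u := by
  obtain ⟨K, hK⟩ :=
    ((locallyLipschitz_of_local hε hu).locallyLipschitzOn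
      (s := univ)).exists_lipschitzOnWith_of_compact isCompact_univ
  exact ⟨K, lipschitzOnWith_univ.1 hK⟩

variable {T : Type*} [MetricSpace T] {ε ℓ ℓ' : ℝ} {x y z : T}

/-- `x` and `y` are joined by a curve of length at most `ℓ` that is `1`-Lipschitz up to an
additive error `ε`. The curve is stationary at `y` after time `ℓ`. -/
def CoarselyJoined (ε : ℝ) (x y : T) (ℓ : ℝ) : Prop :=
  0 ≤ ℓ ∧ ∃ g : ℝ → T, g 0 = x ∧ (∀ t, ℓ ≤ t → g t = y) ∧
    ∀ s t, dist (g s) (g t) ≤ |s - t| + ε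

namespace CoarselyJoined

lemma refl (hε : 0 ≤ ε) (x : T) : CoarselyJoined ε x x 0 :=
  ⟨le_rfl, fun _ => x, rfl, fun _ _ => rfl, fun s t => by simp only [dist_self]; positivity⟩

lemma mono (h : CoarselyJoined ε x y ℓ) {ε' : ℝ} (hε : ε ≤ ε') (hℓ : ℓ ≤ ℓ') :
    CoarselyJoined ε' x y ℓ' := by
  obtain ⟨h0, g, hg0, hgy, hg⟩ := h
  exact ⟨h0.trans hℓ, g, hg0, fun t ht => hgy t (hℓ.trans ht), fun s t =>
    (hg s t).trans (by gcongr)⟩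

lemma trans_of_dist_le (h : CoarselyJoined ε x y ℓ) (hyz : dist y z ≤ ε) :
    CoarselyJoined ε x z (ℓ + dist y z) := by
  obtain ⟨h0, g, hg0, hgy, hg⟩ := h
  rcases eq_or_ne y z with rfl | hne
  · simpa using ⟨h0, g, hg0, hgy, hg⟩
  have hd : 0 < dist y z := dist_pos.2 hne
  have hjump : ∀ s t, s < ℓ + dist y z → ℓ + dist y z ≤ t → dist (g s) z ≤ |s - t| + ε := by
    intro s t hs ht
    rw [abs_sub_comm, abs_of_nonneg (by linarith)]
    rcases lt_or_ge s ℓ with hsℓ | hsℓ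
    · have hgs := hg s ℓ
      rw [hgy ℓ le_rfl, abs_sub_comm, abs_of_nonneg (by linarith)] at hgs
      linarith [dist_triangle (g s) y z]
    · rw [hgy s hsℓ]; linarith
  refine ⟨by positivity, fun t => if t < ℓ + dist y z then g t else z,
    (if_pos (by linarith)).trans hg0, fun t ht => if_neg (not_lt.2 ht), fun s t => ?_⟩
  beta_reduce
  split_ifs with hs ht ht
  · exact hg s t
  · exact hjump s t hs (not_lt.1 ht)
  · rw [dist_comm, abs_sub_comm]; exact hjump t s ht (not_lt.1 hs)
  · have : 0 ≤ ε := dist_nonneg.trans hyz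
    simp only [dist_self]; positivity

end CoarselyJoined

/-- The least length of a coarse curve with error `ε` from `x` to `y`, truncated at `n`. -/
def coarseDist (ε n : ℝ) (x y : T) : ℝ := sInf (insert n {ℓ | CoarselyJoined ε x y ℓ})

section coarseDist

variable {n : ℝ}

lemma bddBelow_insert_coarselyJoined (hn : 0 ≤ n) :
    BddBelow (insert n {ℓ | CoarselyJoined ε x y ℓ}) :=
  ⟨0, by rintro ℓ (rfl | hℓ); exacts [hn, hℓ.1]⟩

lemma coarseDist_self (hε : 0 ≤ ε) (hn : 0 ≤ n) (x : T) : coarseDist ε n x x = 0 :=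
  le_antisymm (csInf_le (bddBelow_insert_coarselyJoined hn) (Or.inr (.refl hε x)))
    (le_csInf (insert_nonempty _ _) (by rintro ℓ (rfl | hℓ); exacts [hn, hℓ.1]))

lemma coarseDist_le_add_dist (hn : 0 ≤ n) (hyz : dist y z ≤ ε) :
    coarseDist ε n x z ≤ coarseDist ε n x y + dist y z := by
  rw [← sub_le_iff_le_add]
  refine le_csInf (insert_nonempty _ _) ?_
  rintro ℓ (rfl | hℓ)
  · have : coarseDist ε ℓ x z ≤ ℓ :=
      csInf_le (bddBelow_insert_coarselyJoined hn) (mem_insert _ _)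
    linarith [dist_nonneg (x := y) (y := z)]
  · rw [sub_le_iff_le_add]
    exact csInf_le (bddBelow_insert_coarselyJoined hn) (Or.inr (hℓ.trans_of_dist_le hyz))

lemma abs_coarseDist_sub_le (hn : 0 ≤ n) (hyz : dist y z < ε) :
    |coarseDist ε n x y - coarseDist ε n x z| ≤ dist y z := by
  have h₁ := coarseDist_le_add_dist (x := x) hn hyz.le
  have h₂ := coarseDist_le_add_dist (ε := ε) (x := x) hn ((dist_comm z y).trans_le hyz.le)
  rw [dist_comm z y] at h₂
  rw [abs_sub_le_iff]
  constructor <;> linarith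

lemma coarselyJoined_of_coarseDist_lt (h : coarseDist ε n x y < ℓ) (hℓ : ℓ ≤ n) :
    CoarselyJoined ε x y ℓ := by
  obtain ⟨ℓ', rfl | hℓ', hlt⟩ := exists_lt_of_csInf_lt (insert_nonempty _ _) h
  · exact absurd hlt hℓ.not_gt
  · exact hℓ'.mono le_rfl hlt.le

end coarseDist

lemma joinedIn_ball_of_coarselyJoined [CompactSpace T] {r : ℝ}
    (h : ∀ ε > 0, CoarselyJoined ε x y ℓ) (hr : ℓ < r) : JoinedIn (ball x r) x y := by
  have h0 : 0 ≤ ℓ := (h 1 one_pos).1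
  choose _ g hg0 hgy hg using fun n : ℕ => h (1 / (n + 1)) (by positivity)
  let U : Ultrafilter ℕ := hyperfilter ℕ
  have hG : Tendsto g U (𝓝 (U.map g).lim) := (U.map g).le_nhds_lim
  set G := (U.map g).lim
  rw [tendsto_pi_nhds] at hG
  have hlip : LipschitzWith 1 G := by
    refine LipschitzWith.of_dist_le_mul fun s t => ?_
    have herr : Tendsto (fun n : ℕ => |s - t| + 1 / ((n : ℝ) + 1)) U (𝓝 (|s - t| + 0)) :=
      (tendsto_const_nhds.add tendsto_one_div_add_atTop_nhds_zero_nat).mono_left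
        Nat.hyperfilter_le_atTop
    simpa [Real.dist_eq] using le_of_tendsto_of_tendsto' ((hG s).dist (hG t)) herr fun n => hg n s t
  have hGx : G 0 = x := tendsto_nhds_unique (hG 0) (by simp [hg0])
  have hGy : G ℓ = y := tendsto_nhds_unique (hG ℓ) (by simp [fun n => hgy n ℓ le_rfl])
  refine ⟨⟨⟨fun t => G (t * ℓ), hlip.continuous.comp (by fun_prop)⟩, by simp [hGx], by simp [hGy]⟩,
    fun t => ?_⟩
  calc dist (G (t * ℓ)) x = dist (G (t * ℓ)) (G 0) := by rw [hGx]
    _ ≤ t * ℓ := by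
      simpa [Real.dist_eq, abs_of_nonneg, t.2.1, h0] using hlip.dist_le_mul (t * ℓ) 0
    _ ≤ ℓ := mul_le_of_le_one_left h0 t.2.2
    _ < r := hr

namespace DoublingPoincare

variable [CompactSpace T] [MeasurableSpace T] [BorelSpace T] {μ : Measure T} {M C : ℝ} {k : ℕ}

lemma abs_sub_le_half_add (h : DoublingPoincare μ M C k) {u : T → ℝ} (hε : 0 < ε)
    (hu : ∀ x y, dist x y < ε → |u x - u y| ≤ dist x y) {L : ℝ} (hL : 0 ≤ L)
    (hLu : ∀ x y, |u x - u y| ≤ L * dist x y) (x y : T) :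
    |u x - u y| ≤ (L / 2 + 4 * C * M ^ (k + 4)) * dist x y := by
  have := h.finite
  rcases eq_or_ne x y with rfl | hxy
  · simp
  set d := dist x y
  have hd : 0 < d := dist_pos.2 hxy
  have hlip : LipschitzWith L.toNNReal u := LipschitzWith.of_dist_le_mul fun a b => by
    rw [Real.dist_eq, Real.coe_toNNReal _ hL]; exact hLu a b
  have hint : Integrable u μ :=
    hlip.continuous.integrable_of_hasCompactSupport (HasCompactSupport.of_compactSpace u)
  obtain ⟨c, hc⟩ := h.exists_lintegral_abs_sub_le_of_local (ρ := fun _ => 1) hint measurable_const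
    hε (z := x) (r := 2 * d) (by positivity) fun a _ b hab => by
      rw [one_mul, edist_dist, edist_dist, Real.dist_eq]
      exact ENNReal.ofReal_le_ofReal (hu a b hab)
  rw [setLIntegral_one] at hc
  have hdk : d ≤ 2 ^ k * (2 * d) := by nlinarith [one_le_pow₀ (n := k) (one_le_two (α := ℝ))]
  have hnear : ∀ z, dist z x ≤ d → |u z - c| ≤ L * (d / 4) + C * (2 * d) * M ^ (k + 4) := by
    intro z hz
    refine h.abs_sub_le_of_ball_subset (by positivity) (s := d / 4) (by positivity) hc
      (ball_subset_ball' (by linarith)) (ball_subset_ball' ?_) fun y hy =>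
        (hLu y z).trans (by gcongr; exact (mem_ball.1 hy).le)
    rw [dist_comm, show (2 : ℝ) ^ (k + 4) * (d / 4) = 2 ^ k * (2 * d) + 2 ^ k * (2 * d) by ring]
    linarith
  have htri := abs_sub_le (u x) c (u y)
  rw [abs_sub_comm c] at htri
  linarith [hnear x (by simpa using hd.le), hnear y (dist_comm y x).le]

/-- The best Lipschitz constant `L` of `u` satisfies `L ≤ L / 2 + 4 * C * M ^ (k + 4)`. -/
lemma abs_sub_le_of_local (h : DoublingPoincare μ M C k) {u : T → ℝ} (hε : 0 < ε)
    (hu : ∀ x y, dist x y < ε → |u x - u y| ≤ dist x y) (x y : T) :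
    |u x - u y| ≤ 8 * C * M ^ (k + 4) * dist x y := by
  have hC := h.nonneg
  have hM := h.one_le
  set S : Set ℝ := {L | 0 ≤ L ∧ ∀ x y, |u x - u y| ≤ L * dist x y}
  have hS : S.Nonempty := by
    obtain ⟨K, hK⟩ := exists_lipschitzWith_of_local (u := u) (L := 1) hε fun a b hab => by
      rw [ENNReal.coe_one, one_mul, edist_dist, edist_dist, Real.dist_eq]
      exact ENNReal.ofReal_le_ofReal (hu a b hab)
    exact ⟨K, K.2, fun a b => hK.dist_le_mul a b⟩
  have hSclosed : IsClosed S := by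
    simp only [S, ofPred_and, ofPred_forall]
    exact isClosed_Ici.inter <| isClosed_iInter fun a => isClosed_iInter fun b =>
      isClosed_le (by fun_prop) (by fun_prop)
  have hSbdd : BddBelow S := ⟨0, fun L hL => hL.1⟩
  obtain ⟨hL0, hL⟩ := hSclosed.csInf_mem hS hSbdd
  have hhalf : sInf S ≤ sInf S / 2 + 4 * C * M ^ (k + 4) :=
    csInf_le hSbdd ⟨by positivity, h.abs_sub_le_half_add hε hu hL0 hL⟩
  exact (hL x y).trans (by gcongr; linarith)

lemma coarselyJoined (h : DoublingPoincare μ M C k) (hε : 0 < ε) (x y : T) :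
    CoarselyJoined ε x y (8 * C * M ^ (k + 4) * dist x y + ε) := by
  have hC := h.nonneg
  have hM := h.one_le
  set ℓ := 8 * C * M ^ (k + 4) * dist x y + ε
  have hℓ : 0 ≤ ℓ := by positivity
  have hdist := h.abs_sub_le_of_local hε (fun a b => abs_coarseDist_sub_le (x := x) hℓ) x y
  rw [coarseDist_self hε.le hℓ, zero_sub, abs_neg] at hdist
  exact coarselyJoined_of_coarseDist_lt (n := ℓ)
    (((le_abs_self _).trans hdist).trans_lt (lt_add_of_pos_right _ hε)) le_rfl

lemma joinedIn_ball (h : DoublingPoincare μ M C k) {r : ℝ}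
    (hr : (8 * C * M ^ (k + 4) + 2) * dist x y < r) : JoinedIn (ball x r) x y := by
  rcases eq_or_ne x y with rfl | hxy
  · exact JoinedIn.refl (by simpa using hr)
  have hd : 0 < dist x y := dist_pos.2 hxy
  exact joinedIn_ball_of_coarselyJoined (ℓ := 8 * C * M ^ (k + 4) * dist x y + dist x y)
    (fun ε hε => (h.coarselyJoined (lt_min hε hd) x y).mono (min_le_left _ _)
      (by gcongr; exact min_le_right _ _)) (by linarith)

lemma pathConnectedSpace [Nonempty T] (h : DoublingPoincare μ M C k) : PathConnectedSpace T :=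
  ⟨inferInstance, fun _ _ => (h.joinedIn_ball (lt_add_one _)).joined⟩

lemma locallyPathConnectedSpace (h : DoublingPoincare μ M C k) : LocallyPathConnectedSpace T := by
  rw [locallyPathConnectedSpace_iff_pathComponentIn_mem_nhds]
  intro x u hu hx
  obtain ⟨r, hr, hru⟩ := Metric.isOpen_iff.1 hu x hx
  have hK : 0 < 8 * C * M ^ (k + 4) + 2 := by
    have := h.one_le; have := h.nonneg; positivity
  refine mem_of_superset (ball_mem_nhds x (div_pos hr hK)) fun y hy => ?_
  rw [mem_ball, lt_div_iff₀ hK, mul_comm, dist_comm] at hy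
  exact (h.joinedIn_ball hy).mono hru

end DoublingPoincare

end Quasiconvexity

/-! ### Duality for weighted `ℓ^p`-norms -/

section DualWeights

variable {ι : Type*} [Fintype ι] {m : ι → ℝ} {p : ℝ}

lemma continuous_sum_mul_rpow (hp : 0 ≤ p) :
    Continuous fun a : ι → ℝ => ∑ j, m j * a j ^ p :=
  continuous_finsetSum _ fun j _ =>
    continuous_const.mul ((continuous_apply j).rpow_const fun _ => Or.inr hp)

lemma exists_isMinOn_sum_mul_rpow (hm : ∀ j, 0 < m j) (hp : 0 < p) {K : Set (ι → ℝ)}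
    (hK : IsClosed K) (hne : K.Nonempty) (hK0 : ∀ a ∈ K, 0 ≤ a) :
    ∃ a ∈ K, IsMinOn (fun a => ∑ j, m j * a j ^ p) K a := by
  obtain ⟨a₁, ha₁⟩ := hne
  set F : (ι → ℝ) → ℝ := fun a => ∑ j, m j * a j ^ p
  have hF : Continuous F := continuous_sum_mul_rpow hp.le
  have hcompact : IsCompact (K ∩ {a | F a ≤ F a₁}) := by
    refine isCompact_Icc (a := (0 : ι → ℝ)) (b := fun j => (F a₁ / m j) ^ p⁻¹)
      |>.of_isClosed_subset (hK.inter (isClosed_le hF continuous_const)) ?_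
    rintro a ⟨ha, haF⟩
    refine ⟨hK0 a ha, fun j => ?_⟩
    have hterm : m j * a j ^ p ≤ F a :=
      Finset.single_le_sum (f := fun j => m j * a j ^ p)
        (fun i _ => mul_nonneg (hm i).le (Real.rpow_nonneg (hK0 a ha i) p)) (Finset.mem_univ j)
    rw [← Real.rpow_rpow_inv (hK0 a ha j) hp.ne']
    refine Real.rpow_le_rpow (Real.rpow_nonneg (hK0 a ha j) p) ?_ (inv_nonneg.2 hp.le)
    rw [le_div_iff₀' (hm j)]
    exact hterm.trans haF
  obtain ⟨a₀, ⟨ha₀, ha₀F⟩, hmin⟩ :=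
    hcompact.exists_isMinOn ⟨a₁, ha₁, le_refl (F a₁)⟩ hF.continuousOn
  refine ⟨a₀, ha₀, fun a ha => ?_⟩
  rcases le_total (F a) (F a₁) with h | h
  · exact hmin ⟨ha, h⟩
  · exact ha₀F.trans h

lemma sum_mul_rpow_le_of_isMinOn (hp : 1 < p) {K : Set (ι → ℝ)} (hK : Convex ℝ K)
    (hK0 : ∀ a ∈ K, 0 ≤ a) {a₀ a : ι → ℝ}
    (hmin : IsMinOn (fun a => ∑ j, m j * a j ^ p) K a₀) (ha₀ : a₀ ∈ K) (ha : a ∈ K) :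
    ∑ j, m j * a₀ j ^ p ≤ ∑ j, m j * a₀ j ^ (p - 1) * a j := by
  have hderiv : HasFDerivAt (fun a : ι → ℝ => ∑ j, m j * a j ^ p)
      (∑ j, m j • ((p * a₀ j ^ (p - 1)) • (ContinuousLinearMap.proj j : (ι → ℝ) →L[ℝ] ℝ)))
      a₀ :=
    HasFDerivAt.fun_sum fun j _ => HasFDerivAt.const_mul
      ((Real.hasDerivAt_rpow_const (Or.inr hp.le)).comp_hasFDerivAt a₀ (hasFDerivAt_apply j a₀)) _
  have hnonneg := hmin.localize.hasFDerivWithinAt_nonneg hderiv.hasFDerivWithinAt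
    (sub_mem_posTangentConeAt_of_segment_subset (hK.segment_subset ha₀ ha))
  have hrpow : ∀ j, a₀ j ^ p = a₀ j ^ (p - 1) * a₀ j := fun j => by
    conv_lhs => rw [← sub_add_cancel p 1]
    exact Real.rpow_add_one' (hK0 a₀ ha₀ j) (by linarith)
  have hderiv_apply : (∑ j, m j • ((p * a₀ j ^ (p - 1)) •
      (ContinuousLinearMap.proj j : (ι → ℝ) →L[ℝ] ℝ))) (a - a₀) =
      p * (∑ j, m j * a₀ j ^ (p - 1) * a j - ∑ j, m j * a₀ j ^ p) := by
    simp only [_root_.sum_apply, _root_.smul_apply, ContinuousLinearMap.proj_apply,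
      Pi.sub_apply, smul_eq_mul, ← Finset.sum_sub_distrib, Finset.mul_sum, hrpow]
    exact Finset.sum_congr rfl fun j _ => by ring
  rw [hderiv_apply] at hnonneg
  exact sub_nonneg.1 (nonneg_of_mul_nonneg_right hnonneg (by linarith))

lemma sum_mul_div_rpow_conjExponent (hp : 1 < p) {a : ι → ℝ} (ha : 0 ≤ a) {M : ℝ} (hM : 0 < M)
    (hsum : ∑ j, m j * a j ^ p = M) :
    ∑ j, m j * (a j ^ (p - 1) / M) ^ (p / (p - 1)) = M ^ (1 - p / (p - 1)) := by
  have hterm : ∀ j, m j * (a j ^ (p - 1) / M) ^ (p / (p - 1)) =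
      m j * a j ^ p * (M ^ (p / (p - 1)))⁻¹ := by
    intro j
    rw [Real.div_rpow (Real.rpow_nonneg (ha j) _) hM.le, ← Real.rpow_mul (ha j),
      mul_div_cancel₀ _ (by linarith : p - 1 ≠ 0)]
    ring
  simp only [hterm, ← Finset.sum_mul, hsum]
  rw [Real.rpow_sub hM, Real.rpow_one]
  exact (div_eq_mul_inv _ _).symm

/-- The weights are the gradient of the weighted `ℓ^p`-norm at its minimizer on the closure of `K`,
up to a constant factor. -/
lemma exists_dual_weights (hm : ∀ j, 0 < m j) {κ : ℝ} (hp : 1 < p) (hκ : 0 < κ)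
    {K : Set (ι → ℝ)} (hK : Convex ℝ K) (hK0 : ∀ a ∈ K, 0 ≤ a)
    (hle : ∀ a ∈ K, κ ≤ ∑ j, m j * a j ^ p) :
    ∃ b : ι → ℝ, 0 ≤ b ∧ (∀ a ∈ K, 1 ≤ ∑ j, m j * b j * a j) ∧
      ∑ j, m j * b j ^ (p / (p - 1)) ≤ κ ^ (1 - p / (p - 1)) := by
  have hq : 1 < p / (p - 1) := (one_lt_div (by linarith)).2 (by linarith)
  rcases K.eq_empty_or_nonempty with rfl | hne
  · refine ⟨0, le_rfl, by simp, ?_⟩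
    simp only [Pi.zero_apply, Real.zero_rpow (by linarith : p / (p - 1) ≠ 0), mul_zero,
      Finset.sum_const_zero]
    positivity
  have hcl0 : closure K ⊆ Ici 0 := closure_minimal hK0 isClosed_Ici
  have hclκ : closure K ⊆ {a | κ ≤ ∑ j, m j * a j ^ p} := closure_minimal hle
    (isClosed_le continuous_const (continuous_sum_mul_rpow (zero_le_one.trans hp.le)))
  obtain ⟨a₀, ha₀, hmin⟩ :=
    exists_isMinOn_sum_mul_rpow hm (zero_lt_one.trans hp) isClosed_closure hne.closure hcl0
  set M := ∑ j, m j * a₀ j ^ p with hM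
  have hM0 : 0 < M := hκ.trans_le (hclκ ha₀)
  refine ⟨fun j => a₀ j ^ (p - 1) / M, fun j => ?_, fun a ha => ?_, ?_⟩
  · exact div_nonneg (Real.rpow_nonneg (hcl0 ha₀ j) _) hM0.le
  · have hfirst := sum_mul_rpow_le_of_isMinOn hp hK.closure hcl0 hmin ha₀ (subset_closure ha)
    have hsum : ∑ j, m j * (a₀ j ^ (p - 1) / M) * a j =
        (∑ j, m j * a₀ j ^ (p - 1) * a j) / M := by
      rw [Finset.sum_div]
      exact Finset.sum_congr rfl fun j _ => by ring
    rwa [hsum, one_le_div hM0]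
  · rw [sum_mul_div_rpow_conjExponent hp (hcl0 ha₀) hM0 hM.symm]
    exact Real.rpow_le_rpow_of_nonpos hκ (hclκ ha₀) (by linarith)

end DualWeights

/-! ### Riemann sums and the codimension 1 Hausdorff measure -/

section CodimH

variable {T : Type*} [MetricSpace T] [MeasurableSpace T] {μ : Measure T}

lemma codimH_mono (μ : Measure T) {A B : Set T} (h : A ⊆ B) : codimH μ A ≤ codimH μ B :=
  iSup₂_mono fun _ _ => iInf_mono fun _ => iInf_mono fun _ => iInf_mono fun _ =>
    le_iInf fun hB => iInf_le_of_le (h.trans hB) le_rfl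

lemma exists_cover_of_codimH_lt {A : Set T} {b : ℝ≥0∞} (h : codimH μ A < b) {δ : ℝ}
    (hδ : 0 < δ) :
    ∃ (c : ℕ → T) (r : ℕ → ℝ), (∀ i, r i ≤ δ) ∧ A ⊆ ⋃ i, ball (c i) (r i) ∧
      ∑' i, μ (ball (c i) (r i)) / ENNReal.ofReal (r i) < b := by
  have hlt := (le_iSup₂ (f := fun (δ : ℝ) (_ : 0 < δ) =>
    ⨅ (c : ℕ → T) (r : ℕ → ℝ) (_ : ∀ i, r i ≤ δ) (_ : A ⊆ ⋃ i, ball (c i) (r i)),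
        ∑' i, μ (ball (c i) (r i)) / ENNReal.ofReal (r i)) δ hδ).trans_lt h
  simp only [iInf_lt_iff] at hlt
  obtain ⟨c, r, hr, hA, hlt⟩ := hlt
  exact ⟨c, r, hr, hA, hlt⟩

/-- `X ≤ ∑ᵢ μ(Bᵢ)/rᵢ · h(yᵢ)` for every finite cover of `S` by balls `Bᵢ` of radii at most `δ`,
and every choice of points `yᵢ ∈ S ∩ Bᵢ`: a lower bound for "`∫_S h dH`" that needs neither a
measure on `S` nor measurability of `h`. -/
def LeRiemannSums (μ : Measure T) (S : Set T) (h : T → ℝ≥0∞) (X : ℝ≥0∞) (δ : ℝ) : Prop :=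
  ∀ (ι : Type) [Fintype ι] (c : ι → T) (r : ι → ℝ) (y : ι → T), (∀ i, r i ≤ δ) →
    S ⊆ ⋃ i, ball (c i) (r i) → (∀ i, y i ∈ S ∩ ball (c i) (r i)) →
      X ≤ ∑ i, μ (ball (c i) (r i)) / ENNReal.ofReal (r i) * h (y i)

namespace LeRiemannSums

variable {S : Set T} {h : T → ℝ≥0∞} {X : ℝ≥0∞} {δ : ℝ} {κ : Type} {E : κ → Set T} {β : κ → ℝ≥0∞}

lemma le_tsum_of_cover (hX : LeRiemannSums μ S h X δ) (hS : IsCompact S) (hE : S ⊆ ⋃ k, E k)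
    (hle : ∀ k, ∀ x ∈ E k, h x ≤ β k) {c : κ → ℕ → T} {r : κ → ℕ → ℝ} (hr : ∀ k i, r k i ≤ δ)
    (hcov : ∀ k, S ∩ E k ⊆ ⋃ i, ball (c k i) (r k i)) :
    X ≤ ∑' k, β k * ∑' i, μ (ball (c k i) (r k i)) / ENNReal.ofReal (r k i) := by
  let Q : Type := {q : κ × ℕ // (S ∩ E q.1 ∩ ball (c q.1 q.2) (r q.1 q.2)).Nonempty}
  let w : κ × ℕ → ℝ≥0∞ := fun q => μ (ball (c q.1 q.2) (r q.1 q.2)) / ENNReal.ofReal (r q.1 q.2)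
  have hQ : S ⊆ ⋃ q : Q, ball (c q.1.1 q.1.2) (r q.1.1 q.1.2) := by
    intro x hx
    obtain ⟨k, hk⟩ := mem_iUnion.1 (hE hx)
    obtain ⟨i, hi⟩ := mem_iUnion.1 (hcov k ⟨hx, hk⟩)
    exact mem_iUnion.2 ⟨⟨(k, i), x, ⟨hx, hk⟩, hi⟩, hi⟩
  obtain ⟨s, hs⟩ := hS.elim_finite_subcover _ (fun _ => isOpen_ball) hQ
  choose y hy using fun q : Q => q.2
  calc X ≤ ∑ q : s, w q.1.1 * h (y q) :=
        hX s (fun q => c q.1.1.1 q.1.1.2) (fun q => r q.1.1.1 q.1.1.2) (fun q => y q)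
          (fun q => hr _ _) (by rwa [iUnion_subtype]) fun q => ⟨(hy q).1.1, (hy q).2⟩
    _ ≤ ∑ q : s, β q.1.1.1 * w q.1.1 := Finset.sum_le_sum fun q _ => by
        rw [mul_comm]
        gcongr
        exact hle _ _ (hy q).1.2
    _ = ∑ q ∈ s, β q.1.1 * w q.1 := Finset.sum_coe_sort s fun q => β q.1.1 * w q.1
    _ ≤ ∑' q : Q, β q.1.1 * w q.1 := ENNReal.sum_le_tsum s
    _ ≤ ∑' q, β q.1 * w q :=
        ENNReal.tsum_comp_le_tsum_of_injective Subtype.val_injective fun q => β q.1 * w q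
    _ = ∑' k, β k * ∑' i, w (k, i) := by
        rw [ENNReal.tsum_prod']
        simp_rw [ENNReal.tsum_mul_left]

lemma le_tsum [Countable κ] (hX : LeRiemannSums μ S h X δ) (hS : IsCompact S)
    (hH : codimH μ S < ⊤) (hδ : 0 < δ) (hE : S ⊆ ⋃ k, E k) (hβ : ∀ k, β k ≠ ⊤)
    (hle : ∀ k, ∀ x ∈ E k, h x ≤ β k) : X ≤ ∑' k, β k * codimH μ (S ∩ E k) := by
  refine ENNReal.le_of_forall_pos_le_add fun η hη _ => ?_
  obtain ⟨τ, hτ0, hτ⟩ := ENNReal.exists_pos_sum_of_countable' (ENNReal.coe_pos.2 hη).ne' κ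
  have hlt : ∀ k, codimH μ (S ∩ E k) < codimH μ (S ∩ E k) + τ k / (β k + 1) := fun k =>
    ENNReal.lt_add_right ((codimH_mono μ inter_subset_left).trans_lt hH).ne
      (ENNReal.div_pos (hτ0 k).ne' (ENNReal.add_ne_top.2 ⟨hβ k, ENNReal.one_ne_top⟩)).ne'
  choose c r hr hcov hsum using fun k => exists_cover_of_codimH_lt (hlt k) hδ
  have hbound : ∀ k, β k * ∑' i, μ (ball (c k i) (r k i)) / ENNReal.ofReal (r k i) ≤
      β k * codimH μ (S ∩ E k) + τ k := fun k =>
    calc _ ≤ β k * (codimH μ (S ∩ E k) + τ k / (β k + 1)) := by gcongr; exact (hsum k).le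
      _ = β k * codimH μ (S ∩ E k) + τ k * (β k / (β k + 1)) := by
          rw [mul_add, ENNReal.div_eq_inv_mul, ENNReal.div_eq_inv_mul]; ring
      _ ≤ β k * codimH μ (S ∩ E k) + τ k * 1 := by
          gcongr
          exact ENNReal.div_le_of_le_mul (by rw [one_mul]; exact le_self_add)
      _ = _ := by rw [mul_one]
  calc X ≤ _ := hX.le_tsum_of_cover hS hE hle hr hcov
    _ ≤ ∑' k, (β k * codimH μ (S ∩ E k) + τ k) := ENNReal.tsum_le_tsum hbound
    _ = ∑' k, β k * codimH μ (S ∩ E k) + ∑' k, τ k := ENNReal.tsum_add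
    _ ≤ _ := by gcongr

end LeRiemannSums

lemma ofReal_two_zpow (k : ℤ) : ENNReal.ofReal (2 ^ k) = 2 ^ k := by
  rw [← Real.rpow_intCast, ← ENNReal.ofReal_rpow_of_pos two_pos, ENNReal.rpow_intCast,
    ENNReal.ofReal_ofNat]

lemma tsum_two_zpow_mul_le_lintegral {Φ : ℝ → ℝ≥0∞} (hΦ : Antitone Φ) :
    ∑' k : ℤ, (2 : ℝ≥0∞) ^ (k + 1) * Φ (2 ^ k) ≤ 4 * ∫⁻ t in Ioi 0, Φ t := by
  let J : ℤ → Set ℝ := fun k => Ioc (2 ^ (k - 1)) (2 ^ k)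
  have hterm : ∀ k : ℤ, (2 : ℝ≥0∞) ^ (k + 1) * Φ (2 ^ k) ≤ 4 * ∫⁻ t in J k, Φ t := by
    intro k
    have hvol : volume (J k) = ENNReal.ofReal (2 ^ (k - 1)) := by
      rw [Real.volume_Ioc, zpow_sub_one₀ two_ne_zero]
      ring_nf
    have hpow : (2 : ℝ≥0∞) ^ (k + 1) = 4 * ENNReal.ofReal (2 ^ (k - 1)) := by
      rw [← ofReal_two_zpow, ← ENNReal.ofReal_ofNat 4, ← ENNReal.ofReal_mul (by norm_num),
        zpow_sub_one₀ two_ne_zero, zpow_add_one₀ two_ne_zero]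
      ring_nf
    rw [hpow, mul_assoc, ← hvol, mul_comm (volume _), ← setLIntegral_const]
    gcongr 4 * ?_
    exact setLIntegral_mono' measurableSet_Ioc fun t ht => hΦ ht.2
  have hdisj : Pairwise (Function.onFun Disjoint J) := by
    have hmono : Monotone fun k : ℤ => (2 : ℝ) ^ (k - 1) := fun a b hab =>
      zpow_le_zpow_right₀ one_le_two (by omega)
    simpa [J, Order.succ_eq_add_one] using hmono.pairwise_disjoint_on_Ioc_succ
  calc _ ≤ ∑' k : ℤ, 4 * ∫⁻ t in J k, Φ t := ENNReal.tsum_le_tsum hterm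
    _ = 4 * ∫⁻ t in ⋃ k, J k, Φ t := by
        rw [ENNReal.tsum_mul_left, lintegral_iUnion (fun _ => measurableSet_Ioc) hdisj]
    _ ≤ 4 * ∫⁻ t in Ioi 0, Φ t := by
        gcongr
        exact iUnion_subset fun k t ht => (zpow_pos two_pos (k - 1) : (0 : ℝ) < _).trans ht.1

/-- The sets `E` are the zero set of `h` and the dyadic shells `{2 ^ k < h ≤ 2 ^ (k + 1)}`. -/
lemma LeRiemannSums.le_choquetIntegral {S : Set T} {h : T → ℝ≥0∞} {X : ℝ≥0∞} {δ : ℝ}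
    (hX : LeRiemannSums μ S h X δ) (hS : IsCompact S) (hH : codimH μ S < ⊤)
    (hh : ∀ x, h x ≠ ⊤) (hδ : 0 < δ) : X ≤ 4 * choquetIntegral μ S h := by
  let E : Option ℤ → Set T := fun o => o.elim {x | h x = 0}
    fun k => {x | (2 : ℝ≥0∞) ^ k < h x ∧ h x ≤ 2 ^ (k + 1)}
  let β : Option ℤ → ℝ≥0∞ := fun o => o.elim 0 fun k => 2 ^ (k + 1)
  have hE : S ⊆ ⋃ o, E o := by
    intro x _
    rcases eq_or_ne (h x) 0 with h0 | h0
    · exact mem_iUnion.2 ⟨none, h0⟩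
    · obtain ⟨k, hk⟩ := ENNReal.exists_mem_Ioc_zpow h0 (hh x) ENNReal.one_lt_two (by simp)
      exact mem_iUnion.2 ⟨some k, hk⟩
  have hβ : ∀ o, β o ≠ ⊤ := by
    rintro (_ | k)
    · exact ENNReal.zero_ne_top
    · exact (ENNReal.zpow_lt_top two_ne_zero (by simp) _).ne
  have hle : ∀ o, ∀ x ∈ E o, h x ≤ β o := by
    rintro (_ | k) x hx
    · exact le_of_eq hx
    · exact hx.2
  let Φ : ℝ → ℝ≥0∞ := fun t => codimH μ {x | x ∈ S ∧ ENNReal.ofReal t < h x}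
  have hΦ : Antitone Φ := fun s t hst => codimH_mono μ fun x hx =>
    ⟨hx.1, (ENNReal.ofReal_le_ofReal hst).trans_lt hx.2⟩
  calc X ≤ _ := hX.le_tsum hS hH hδ hE hβ hle
    _ = ∑' k : ℤ, (2 : ℝ≥0∞) ^ (k + 1) * codimH μ (S ∩ E (some k)) := by
        refine ((Option.some_injective ℤ).tsum_eq fun o ho => ?_).symm
        rcases o with _ | k
        · simp [β] at ho
        · exact mem_range_self k
    _ ≤ ∑' k : ℤ, (2 : ℝ≥0∞) ^ (k + 1) * Φ (2 ^ k) := by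
        gcongr with k
        refine codimH_mono μ fun x hx => ⟨hx.1, ?_⟩
        rw [ofReal_two_zpow]
        exact hx.2.1
    _ ≤ 4 * choquetIntegral μ S h := tsum_two_zpow_mul_le_lintegral hΦ

end CodimH

/-! ### Real increments of circle-valued maps -/

/-- The representative in `(-1/2, 1/2]` of a point of `ℝ/ℤ`. -/
def circleRep (a : UnitAddCircle) : ℝ := AddCircle.equivIoc 1 (-1 / 2) a

lemma coe_circleRep (a : UnitAddCircle) : (circleRep a : UnitAddCircle) = a :=
  AddCircle.coe_equivIoc

lemma circleRep_mem (a : UnitAddCircle) : circleRep a ∈ Ioc (-1 / 2 : ℝ) (1 / 2) := by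
  have := (AddCircle.equivIoc (1 : ℝ) (-1 / 2) a).2
  norm_num at this ⊢
  exact this

lemma circleRep_coe {t : ℝ} (h : |t| < 1 / 2) : circleRep (t : UnitAddCircle) = t := by
  rw [abs_lt] at h
  exact AddCircle.equivIoc_coe_of_mem ⟨by linarith, by linarith⟩

lemma measurable_circleRep : Measurable circleRep :=
  measurable_subtype_coe.comp (AddCircle.measurableEquivIoc 1 (-1 / 2)).measurable

lemma abs_circleRep (a : UnitAddCircle) : |circleRep a| = ‖a‖ := by
  obtain ⟨h1, h2⟩ := circleRep_mem a
  conv_rhs => rw [← coe_circleRep a]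
  refine ((AddCircle.norm_coe_eq_abs_iff 1 one_ne_zero).2 ?_).symm
  rw [abs_one, abs_le]
  constructor <;> linarith

lemma norm_coe_le_abs (t : ℝ) : ‖(t : UnitAddCircle)‖ ≤ |t| := by
  rw [UnitAddCircle.norm_eq]
  simpa using round_le t 0

lemma circleRep_add {a b : UnitAddCircle} (h : ‖a‖ + ‖b‖ < 1 / 2) :
    circleRep (a + b) = circleRep a + circleRep b := by
  conv_lhs => rw [← coe_circleRep a, ← coe_circleRep b, ← AddCircle.coe_add]
  refine circleRep_coe ((abs_add_le _ _).trans_lt ?_)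
  rwa [abs_circleRep, abs_circleRep]

lemma circleRep_sub_add_sub {a b c : UnitAddCircle} (h : ‖a - b‖ + ‖b - c‖ < 1 / 2) :
    circleRep (a - c) = circleRep (a - b) + circleRep (b - c) := by
  rw [← circleRep_add h, sub_add_sub_cancel]

lemma eq_of_coe_eq {s t : ℝ} (h : (s : UnitAddCircle) = t) (hst : |s - t| < 1) : s = t := by
  have hzero : ((s - t : ℝ) : UnitAddCircle) = 0 := by rw [AddCircle.coe_sub, h, sub_self]
  obtain ⟨n, hn⟩ := (AddCircle.coe_eq_zero_iff _).1 hzero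
  have hn' : (n : ℝ) = s - t := by simpa using hn
  rw [← hn'] at hst
  rw [Int.abs_lt_one_iff.1 (by exact_mod_cast hst : |n| < 1), Int.cast_zero] at hn'
  exact sub_eq_zero.1 hn'.symm

lemma circleRep_sub_eq_or (a b : UnitAddCircle) :
    circleRep (a - b) = circleRep a - circleRep b - 1 ∨
      circleRep (a - b) = circleRep a - circleRep b ∨
      circleRep (a - b) = circleRep a - circleRep b + 1 := by
  obtain ⟨n, hn⟩ : ∃ n : ℤ, circleRep (a - b) = circleRep a - circleRep b + n := by
    have hzero : ((circleRep (a - b) - (circleRep a - circleRep b) : ℝ) : UnitAddCircle) = 0 := by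
      rw [AddCircle.coe_sub, AddCircle.coe_sub, coe_circleRep, coe_circleRep, coe_circleRep,
        sub_self]
    obtain ⟨n, hn⟩ := (AddCircle.coe_eq_zero_iff _).1 hzero
    exact ⟨n, by simp only [zsmul_eq_mul, mul_one] at hn; linarith⟩
  have ha := circleRep_mem a
  have hb := circleRep_mem b
  have hab := circleRep_mem (a - b)
  have hlt : n < 2 := by
    exact_mod_cast (by linarith [ha.1, hb.2, hab.2] : (n : ℝ) < 2)
  have hgt : -2 < n := by
    exact_mod_cast (by linarith [ha.2, hb.1, hab.1] : (-2 : ℝ) < n)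
  interval_cases n
  · exact Or.inl (by push_cast at hn; linarith)
  · exact Or.inr (Or.inl (by push_cast at hn; linarith))
  · exact Or.inr (Or.inr (by push_cast at hn; linarith))

section LiftedIncrement

variable {T : Type*} {f φ : T → UnitAddCircle} {v w ρ : T → ℝ} {ε : ℝ} {x x' y z : T}

/-- The increment of `f + v` from `x'` to `x` as a real number, the increment of `f` being
lifted to its shortest representative. -/
def liftedIncrement (f : T → UnitAddCircle) (v : T → ℝ) (x x' : T) : ℝ :=
  v x - v x' + circleRep (f x - f x')

lemma norm_add_coe_sub_le (f : T → UnitAddCircle) (v : T → ℝ) (x x' : T) :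
    ‖(f x + (v x : UnitAddCircle)) - (f x' + (v x' : UnitAddCircle))‖ ≤
      |liftedIncrement f v x x'| := by
  refine le_of_eq_of_le ?_ (norm_coe_le_abs _)
  rw [liftedIncrement, AddCircle.coe_add, AddCircle.coe_sub, coe_circleRep]
  congr 1
  abel

lemma liftedIncrement_smul_add_smul {s t : ℝ} (hst : s + t = 1) (f : T → UnitAddCircle)
    (v w : T → ℝ) (x x' : T) : liftedIncrement f (s • v + t • w) x x' =
      s * liftedIncrement f v x x' + t * liftedIncrement f w x x' := by
  simp only [liftedIncrement, Pi.add_apply, Pi.smul_apply, smul_eq_mul]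
  linear_combination (-circleRep (f x - f x')) * hst

lemma liftedIncrement_eq_circleRep (hw : ∀ x, (w x : UnitAddCircle) = φ x - f x)
    (h : |w x - w x'| + ‖f x - f x'‖ + ‖φ x - φ x'‖ < 1) :
    liftedIncrement f w x x' = circleRep (φ x - φ x') := by
  refine eq_of_coe_eq ?_ ?_
  · rw [liftedIncrement, AddCircle.coe_add, AddCircle.coe_sub, coe_circleRep, coe_circleRep,
      hw, hw]
    abel
  · rw [← abs_circleRep, ← abs_circleRep] at h
    rw [liftedIncrement]
    linarith [abs_sub (w x - w x' + circleRep (f x - f x')) (circleRep (φ x - φ x')),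
      abs_add_le (w x - w x') (circleRep (f x - f x'))]

/-- The lift of `f + v` to `ℝ` near `z`, normalized to be `v z` at `z`. It jumps where `f` crosses
the antipode of `f z`. -/
def localLift (f : T → UnitAddCircle) (v : T → ℝ) (z y : T) : ℝ := v y + circleRep (f y - f z)

lemma localLift_sub_localLift (h : ‖f x - f x'‖ + ‖f x' - f z‖ < 1 / 2) :
    localLift f v z x - localLift f v z x' = liftedIncrement f v x x' := by
  rw [localLift, localLift, liftedIncrement, circleRep_sub_add_sub h]
  ring

lemma localLift_eq_sub (h : ‖f y - f x‖ + ‖f x - f z‖ < 1 / 2) :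
    localLift f v x y = localLift f v z y - circleRep (f x - f z) := by
  rw [localLift, localLift, circleRep_sub_add_sub h]
  ring

lemma integrable_localLift [TopologicalSpace T] [CompactSpace T] [MeasurableSpace T]
    [BorelSpace T] {μ : Measure T} [IsFiniteMeasure μ] (hf : Continuous f) (hv : Continuous v)
    (z : T) : Integrable (localLift f v z) μ := by
  refine (hv.integrable_of_hasCompactSupport (HasCompactSupport.of_compactSpace v)).add ?_
  refine Integrable.of_bound (C := 1 / 2)
    (measurable_circleRep.comp (hf.sub continuous_const).measurable).aestronglyMeasurable
    (Eventually.of_forall fun y => ?_)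
  rw [Real.norm_eq_abs, abs_circleRep]
  simpa using AddCircle.norm_le_half_period (1 : ℝ) one_ne_zero (x := f y - f z)

/-- `ρ` bounds the slope of `f + v` at all scales below `ε`. -/
def IsLocalSlope [PseudoMetricSpace T] (f : T → UnitAddCircle) (v ρ : T → ℝ) (ε : ℝ) : Prop :=
  ∀ ⦃x x' : T⦄, dist x x' < ε → |liftedIncrement f v x x'| ≤ ρ x * dist x x'

lemma IsLocalSlope.continuous [PseudoMetricSpace T] (h : IsLocalSlope f v ρ ε) (hε : 0 < ε)
    (hf : Continuous f) : Continuous v := by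
  refine continuous_iff_continuousAt.2 fun x => ?_
  rw [ContinuousAt, tendsto_iff_dist_tendsto_zero]
  have hlim : Tendsto (fun x' => ρ x * dist x x' + ‖f x - f x'‖) (𝓝 x) (𝓝 0) := by
    have : Continuous fun x' => ρ x * dist x x' + ‖f x - f x'‖ := by fun_prop
    simpa using this.tendsto x
  refine squeeze_zero' (Eventually.of_forall fun _ => dist_nonneg) ?_ hlim
  filter_upwards [ball_mem_nhds x hε] with x' hx'
  have hslope := h (mem_ball'.1 hx')
  have habs := abs_sub (liftedIncrement f v x x') (circleRep (f x - f x'))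
  rw [abs_circleRep, liftedIncrement, add_sub_cancel_right] at habs
  rw [dist_comm, Real.dist_eq]
  exact habs.trans (add_le_add_left hslope _)

lemma IsLocalSlope.edist_add_coe_le [PseudoMetricSpace T] (h : IsLocalSlope f v ρ ε)
    (hx : 0 ≤ ρ x) (hd : dist x x' < ε) :
    edist (f x + (v x : UnitAddCircle)) (f x' + (v x' : UnitAddCircle)) ≤
      ENNReal.ofReal (ρ x) * edist x x' := by
  rw [edist_dist, edist_dist, dist_eq_norm, ← ENNReal.ofReal_mul hx]
  exact ENNReal.ofReal_le_ofReal ((norm_add_coe_sub_le f v x x').trans (h hd))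

end LiftedIncrement

/-! ### Ball sums and separated nets -/

section BallSum

variable {T ι : Type*} [PseudoMetricSpace T] [Fintype ι] {c : ι → T} {r a : ι → ℝ}

/-- The step function `∑ᵢ aᵢ 1_{B(cᵢ, rᵢ)}`. -/
def ballSum (c : ι → T) (r a : ι → ℝ) (x : T) : ℝ :=
  ∑ i, (ball (c i) (r i)).indicator (fun _ => a i) x

lemma ballSum_nonneg (ha : 0 ≤ a) (x : T) : 0 ≤ ballSum c r a x :=
  Finset.sum_nonneg fun i _ => indicator_nonneg (fun _ _ => ha i) x

lemma ballSum_le_sum (ha : 0 ≤ a) (x : T) : ballSum c r a x ≤ ∑ i, a i :=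
  Finset.sum_le_sum fun i _ => indicator_le_self' (fun _ _ => ha i) x

lemma le_ballSum (ha : 0 ≤ a) {i : ι} {x : T} (hx : x ∈ ball (c i) (r i)) :
    a i ≤ ballSum c r a x := by
  rw [← indicator_of_mem hx (fun _ => a i)]
  exact Finset.single_le_sum (f := fun j => (ball (c j) (r j)).indicator (fun _ => a j) x)
    (fun j _ => indicator_nonneg (fun _ _ => ha j) x) (Finset.mem_univ i)

lemma ballSum_rpow_le {N q : ℝ} (hq : 1 ≤ q) (ha : 0 ≤ a) (x : T)
    (hN : ballSum c r 1 x ≤ N) :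
    ballSum c r a x ^ q ≤ N ^ (q - 1) * ballSum c r (fun i => a i ^ q) x := by
  classical
  simp only [ballSum, indicator_apply, ← Finset.sum_filter, Pi.one_apply, Finset.sum_const,
    nsmul_eq_mul, mul_one] at hN ⊢
  refine (Real.rpow_sum_le_const_mul_sum_rpow_of_nonneg _ hq fun i _ => ha i).trans ?_
  gcongr
  exact Finset.sum_nonneg fun i _ => Real.rpow_nonneg (ha i) q

variable [MeasurableSpace T] [BorelSpace T]

lemma measurable_ballSum (c : ι → T) (r a : ι → ℝ) : Measurable (ballSum c r a) :=
  Finset.measurable_sum _ fun _ _ => measurable_const.indicator measurableSet_ball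

lemma integrable_ballSum (μ : Measure T) [IsFiniteMeasure μ] (c : ι → T) (r a : ι → ℝ) :
    Integrable (ballSum c r a) μ :=
  integrable_finsetSum _ fun _ _ => (integrable_const _).indicator measurableSet_ball

lemma lintegral_ballSum_rpow_le {μ : Measure T} [IsFiniteMeasure μ] {N q : ℝ} (hq : 1 ≤ q)
    (ha : 0 ≤ a) (hN : ∀ x, ballSum c r 1 x ≤ N) :
    ∫⁻ x, ENNReal.ofReal (ballSum c r a x) ^ q ∂μ ≤
      ENNReal.ofReal (N ^ (q - 1) * ∑ i, μ.real (ball (c i) (r i)) * a i ^ q) := by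
  have hq0 : 0 ≤ q := by linarith
  have hint : Integrable (ballSum c r fun i => a i ^ q) μ := integrable_ballSum μ c r _
  have hpt : ∀ x, ENNReal.ofReal (ballSum c r a x) ^ q ≤
      ENNReal.ofReal (N ^ (q - 1) * ballSum c r (fun i => a i ^ q) x) := fun x => by
    rw [ENNReal.ofReal_rpow_of_nonneg (ballSum_nonneg ha x) hq0]
    exact ENNReal.ofReal_le_ofReal (ballSum_rpow_le hq ha x (hN x))
  have hnonneg : ∀ x, 0 ≤ N ^ (q - 1) * ballSum c r (fun i => a i ^ q) x := fun x =>
    mul_nonneg (Real.rpow_nonneg ((ballSum_nonneg zero_le_one x).trans (hN x)) _)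
      (ballSum_nonneg (fun i => Real.rpow_nonneg (ha i) q) x)
  refine (lintegral_mono hpt).trans_eq ?_
  rw [← ofReal_integral_eq_lintegral_ofReal (hint.const_mul _) (Eventually.of_forall hnonneg),
    integral_const_mul]
  simp only [ballSum]
  rw [integral_finsetSum _ fun i _ => (integrable_const _).indicator measurableSet_ball]
  simp only [integral_indicator_const _ measurableSet_ball, smul_eq_mul]

end BallSum

lemma exists_separated_net (T : Type*) [PseudoMetricSpace T] [CompactSpace T] {ε : ℝ}
    (hε : 0 < ε) :
    ∃ s : Finset T, (⋃ z : s, ball (z : T) ε = univ) ∧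
      Pairwise fun z z' : s => ε / 2 ≤ dist (z : T) z' := by
  have hp : packingNumber (ε / 2).toNNReal (univ : Set T) ≠ ⊤ := by
    obtain ⟨N, -, hfin, hN⟩ := exists_finite_isCover_of_isCompact (ε := (ε / 4).toNNReal)
      (by simpa using hε) (isCompact_univ (X := T))
    have htwo : (ε / 2).toNNReal = 2 * (ε / 4).toNNReal := by
      rw [← Real.toNNReal_ofNat 2, ← Real.toNNReal_mul zero_le_two]
      ring_nf
    rw [htwo]
    exact ne_top_of_le_ne_top (Set.encard_ne_top_iff.2 hfin)
      ((packingNumber_two_mul_le_externalCoveringNumber _ _).trans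
        hN.externalCoveringNumber_le_encard)
  have hfin : (maximalSeparatedSet (ε / 2).toNNReal (univ : Set T)).Finite := by
    rw [← Set.encard_ne_top_iff, encard_maximalSeparatedSet hp]
    exact hp
  refine ⟨hfin.toFinset, eq_univ_of_forall fun x => ?_, fun z z' hne => ?_⟩
  · obtain ⟨z, hz, hxz⟩ := isCover_maximalSeparatedSet hp (mem_univ x)
    refine mem_iUnion.2 ⟨⟨z, hfin.mem_toFinset.2 hz⟩, ?_⟩
    have : dist x z ≤ ε / 2 := by
      rwa [← edist_le_ofReal (by positivity)]
    rw [mem_ball]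
    linarith
  · have : ((ε / 2).toNNReal : ℝ≥0∞) < edist (z : T) z' :=
      isSeparated_maximalSeparatedSet (hfin.mem_toFinset.1 z.2) (hfin.mem_toFinset.1 z'.2)
        (Subtype.coe_injective.ne hne)
    rw [edist_dist] at this
    exact ((ENNReal.ofReal_lt_ofReal_iff_of_nonneg (by positivity)).1 this).le

lemma DoublingPoincare.ballSum_one_le {T ι : Type*} [MetricSpace T] [MeasurableSpace T]
    [BorelSpace T] [Fintype ι] {μ : Measure T} {M C : ℝ} {k : ℕ} (h : DoublingPoincare μ M C k)
    {z : ι → T} {ε : ℝ} (hε : 0 < ε) (hz : Pairwise fun i j => ε / 2 ≤ dist (z i) (z j)) (n : ℕ)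
    (x : T) : ballSum z (fun _ => 2 ^ n * ε) 1 x ≤ M ^ (n + 4) := by
  classical
  have := h.finite
  simp only [ballSum, indicator_apply, ← Finset.sum_filter, Pi.one_apply, Finset.sum_const,
    nsmul_eq_mul, mul_one]
  set J := Finset.univ.filter fun i => x ∈ ball (z i) (2 ^ n * ε) with hJ
  set B := ball x (2 ^ (n + 1) * ε)
  have hnear : ∀ i ∈ J, dist x (z i) < 2 ^ n * ε := fun i hi => by simpa [hJ] using hi
  have hε_le : ε ≤ 2 ^ n * ε := le_mul_of_one_le_left hε.le (one_le_pow₀ one_le_two)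
  have hdisjoint : ∑ i ∈ J, μ.real (ball (z i) (ε / 4)) ≤ μ.real B := by
    rw [← measureReal_biUnion_finset
      (fun i _ j _ hne => ball_disjoint_ball (by linarith [hz hne]))
      (fun _ _ => measurableSet_ball)]
    refine measureReal_mono (iUnion₂_subset fun i hi => ball_subset_ball' ?_)
    rw [dist_comm, pow_succ]
    linarith [hnear i hi]
  have hdoubling : ∀ i ∈ J, μ.real B ≤ M ^ (n + 4) * μ.real (ball (z i) (ε / 4)) := fun i hi => by
    refine (measureReal_mono (ball_subset_ball' ?_)).trans
      (h.doubling_pow (n + 4) (z i) (by positivity))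
    rw [pow_succ, pow_add]
    linarith [hnear i hi]
  refine le_of_mul_le_mul_right ?_ (h.pos x (2 ^ (n + 1) * ε) (by positivity))
  calc J.card * μ.real B = ∑ _ ∈ J, μ.real B := by rw [Finset.sum_const, nsmul_eq_mul]
    _ ≤ ∑ i ∈ J, M ^ (n + 4) * μ.real (ball (z i) (ε / 4)) := Finset.sum_le_sum hdoubling
    _ = M ^ (n + 4) * ∑ i ∈ J, μ.real (ball (z i) (ε / 4)) := by rw [Finset.mul_sum]
    _ ≤ M ^ (n + 4) * μ.real B := by have := h.one_le; gcongr

/-! ### The test map of a covered level set -/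

section Cutoff

variable {T : Type*} [PseudoMetricSpace T] {r : ℝ} {c y y' : T}

/-- The Lipschitz cutoff that is `1` on `B(c, r)` and `0` off `B(c, 2r)`. -/
def ballCutoff (c : T) (r : ℝ) (y : T) : ℝ := max 0 (min 1 (2 - dist y c / r))

lemma ballCutoff_nonneg (c : T) (r : ℝ) (y : T) : 0 ≤ ballCutoff c r y := le_max_left _ _

lemma ballCutoff_eq_one (hr : 0 < r) (hy : y ∈ ball c r) : ballCutoff c r y = 1 := by
  have hlt : dist y c / r < 1 := (div_lt_one hr).2 hy
  rw [ballCutoff, min_eq_left (by linarith), max_eq_right zero_le_one]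

lemma ballCutoff_eq_zero (hr : 0 < r) (hy : 2 * r ≤ dist y c) : ballCutoff c r y = 0 := by
  have hle : 2 ≤ dist y c / r := (le_div_iff₀ hr).2 hy
  exact max_eq_left ((min_le_right _ _).trans (by linarith))

lemma abs_ballCutoff_sub_le (hr : 0 < r) (c y y' : T) :
    |ballCutoff c r y - ballCutoff c r y'| ≤ r⁻¹ * dist y y' := by
  calc |ballCutoff c r y - ballCutoff c r y'|
      ≤ |min 1 (2 - dist y c / r) - min 1 (2 - dist y' c / r)| := by
        simpa [ballCutoff] using abs_max_sub_max_le_max 0 (min 1 (2 - dist y c / r)) 0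
          (min 1 (2 - dist y' c / r))
    _ ≤ |(2 - dist y c / r) - (2 - dist y' c / r)| := by
        simpa using abs_min_sub_min_le_max 1 (2 - dist y c / r) 1 (2 - dist y' c / r)
    _ = r⁻¹ * |dist y' c - dist y c| := by
        rw [show 2 - dist y c / r - (2 - dist y' c / r) = r⁻¹ * (dist y' c - dist y c) by ring,
          abs_mul, abs_of_pos (inv_pos.2 hr)]
    _ ≤ r⁻¹ * dist y y' := by
        rw [dist_comm y y']
        exact mul_le_mul_of_nonneg_left (abs_dist_sub_le y' y c) (inv_nonneg.2 hr.le)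

lemma abs_ballCutoff_sub_le_indicator (hr : 0 < r) (hyy' : dist y y' < r) :
    |ballCutoff c r y - ballCutoff c r y'| ≤
      (ball c (3 * r)).indicator (fun _ => r⁻¹) y * dist y y' := by
  by_cases hy : y ∈ ball c (3 * r)
  · rw [indicator_of_mem hy]
    exact abs_ballCutoff_sub_le hr c y y'
  · rw [mem_ball, not_lt] at hy
    have hy' : 2 * r ≤ dist y' c := by linarith [dist_triangle y y' c]
    rw [ballCutoff_eq_zero hr (by linarith), ballCutoff_eq_zero hr hy', sub_zero, abs_zero]
    exact mul_nonneg (indicator_nonneg (fun _ _ => inv_nonneg.2 hr.le) _) dist_nonneg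

end Cutoff

section UnionCutoff

variable {T ι : Type*} [PseudoMetricSpace T] [Fintype ι] {c : ι → T} {r : ι → ℝ} {y y' : T}

/-- The Lipschitz cutoff that is `1` on `⋃ᵢ B(cᵢ, rᵢ)` and `0` off `⋃ᵢ B(cᵢ, 2rᵢ)`. -/
def unionCutoff (c : ι → T) (r : ι → ℝ) (y : T) : ℝ := min 1 (∑ i, ballCutoff (c i) (r i) y)

/-- The density `∑ᵢ rᵢ⁻¹ 1_{B(cᵢ, 3rᵢ)}`, which bounds the slope of `unionCutoff c r`. -/
def coverDensity (c : ι → T) (r : ι → ℝ) : T → ℝ :=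
  ballSum c (fun i => 3 * r i) fun i => (r i)⁻¹

lemma unionCutoff_eq_one (hr : ∀ i, 0 < r i) (hy : y ∈ ⋃ i, ball (c i) (r i)) :
    unionCutoff c r y = 1 := by
  obtain ⟨i, hi⟩ := mem_iUnion.1 hy
  refine min_eq_left ?_
  rw [← ballCutoff_eq_one (hr i) hi]
  exact Finset.single_le_sum (f := fun j => ballCutoff (c j) (r j) y)
    (fun j _ => ballCutoff_nonneg _ _ _) (Finset.mem_univ i)

lemma unionCutoff_eq_zero (hr : ∀ i, 0 < r i) (hy : ∀ i, 2 * r i ≤ dist y (c i)) :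
    unionCutoff c r y = 0 := by
  rw [unionCutoff, Finset.sum_eq_zero fun i _ => ballCutoff_eq_zero (hr i) (hy i),
    min_eq_right zero_le_one]

lemma abs_unionCutoff_sub_le (hr : ∀ i, 0 < r i) (hyy' : ∀ i, dist y y' < r i) :
    |unionCutoff c r y - unionCutoff c r y'| ≤ coverDensity c r y * dist y y' := by
  calc |unionCutoff c r y - unionCutoff c r y'|
      ≤ |∑ i, ballCutoff (c i) (r i) y - ∑ i, ballCutoff (c i) (r i) y'| := by
        simpa [unionCutoff] using abs_min_sub_min_le_max 1 (∑ i, ballCutoff (c i) (r i) y) 1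
          (∑ i, ballCutoff (c i) (r i) y')
    _ ≤ ∑ i, |ballCutoff (c i) (r i) y - ballCutoff (c i) (r i) y'| := by
        rw [← Finset.sum_sub_distrib]
        exact Finset.abs_sum_le_sum_abs _ _
    _ ≤ ∑ i, (ball (c i) (3 * r i)).indicator (fun _ => (r i)⁻¹) y * dist y y' :=
        Finset.sum_le_sum fun i _ => abs_ballCutoff_sub_le_indicator (hr i) (hyy' i)
    _ = coverDensity c r y * dist y y' := by rw [coverDensity, ballSum, Finset.sum_mul]

lemma coverDensity_nonneg (hr : ∀ i, 0 < r i) (x : T) : 0 ≤ coverDensity c r x :=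
  ballSum_nonneg (fun i => inv_nonneg.2 (hr i).le) x

end UnionCutoff

section TestFunction

/-- The real number `±(1 - t) / 2`, with the sign of the representative of `a`. -/
def circleProfile (a : UnitAddCircle) (t : ℝ) : ℝ :=
  if 0 ≤ circleRep a then (1 - t) / 2 else -((1 - t) / 2)

lemma circleProfile_one (a : UnitAddCircle) : circleProfile a 1 = 0 := by
  simp [circleProfile]

lemma circleProfile_of_nonneg {a : UnitAddCircle} (ha : 0 ≤ circleRep a) (t : ℝ) :
    circleProfile a t = (1 - t) / 2 := if_pos ha

lemma circleProfile_of_neg {a : UnitAddCircle} (ha : circleRep a < 0) (t : ℝ) :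
    circleProfile a t = -((1 - t) / 2) := if_neg ha.not_ge

/-- The profile is constant where the representative of `a` changes sign, and equals `±1/2` where
the representative jumps, so that the jumps of both cancel. -/
lemma abs_circleProfile_sub_le {a b : UnitAddCircle} {η s t : ℝ} (hη : η ≤ 1 / 8)
    (hab : ‖a - b‖ < η) (hs1 : ‖a‖ < η → s = 1) (hs0 : 1 / 4 ≤ ‖a‖ → s = 0)
    (ht1 : ‖b‖ < η → t = 1) (ht0 : 1 / 4 ≤ ‖b‖ → t = 0) :
    |circleRep (a - b) - (circleRep a - circleRep b) +
      (circleProfile a s - circleProfile b t)| ≤ |s - t| := by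
  obtain ⟨ha1, ha2⟩ := circleRep_mem a
  obtain ⟨hb1, hb2⟩ := circleRep_mem b
  rw [← abs_circleRep] at hs1 hs0 ht1 ht0 hab
  rcases circleRep_sub_eq_or a b with h | h | h <;> rw [h, abs_lt] at hab <;> rw [h]
  · rw [hs0 (le_abs.2 (Or.inl (by linarith))), ht0 (le_abs.2 (Or.inr (by linarith))),
      circleProfile_of_nonneg (by linarith), circleProfile_of_neg (by linarith)]
    norm_num
  · rw [sub_self, zero_add]
    have hopposite : (circleRep a < 0 ∧ 0 ≤ circleRep b) ∨ (0 ≤ circleRep a ∧ circleRep b < 0) →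
        |circleProfile a s - circleProfile b t| ≤ |s - t| := fun hsign => by
      rw [hs1 (abs_lt.2 (by rcases hsign with h | h <;> constructor <;> linarith)),
        ht1 (abs_lt.2 (by rcases hsign with h | h <;> constructor <;> linarith)),
        circleProfile_one, circleProfile_one, sub_self, sub_self]
    rcases lt_or_ge (circleRep a) 0 with ha | ha <;> rcases lt_or_ge (circleRep b) 0 with hb | hb
    · rw [circleProfile_of_neg ha, circleProfile_of_neg hb, abs_le]
      constructor <;> linarith [le_abs_self (s - t), neg_abs_le (s - t), abs_nonneg (s - t)]
    · exact hopposite (Or.inl ⟨ha, hb⟩)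
    · exact hopposite (Or.inr ⟨ha, hb⟩)
    · rw [circleProfile_of_nonneg ha, circleProfile_of_nonneg hb, abs_le]
      constructor <;> linarith [le_abs_self (s - t), neg_abs_le (s - t), abs_nonneg (s - t)]
  · rw [hs0 (le_abs.2 (Or.inr (by linarith))), ht0 (le_abs.2 (Or.inl (by linarith))),
      circleProfile_of_neg (by linarith), circleProfile_of_nonneg (by linarith)]
    norm_num

variable {T ι : Type*} {f φ : T → UnitAddCircle} {w θ : T → ℝ} {η δ : ℝ}

/-- The correction `v` of `f` for which `f + v` is the map with values `circleProfile (φ x) (θ x)`,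
given a lift `w` of `φ - f`. -/
def testFunction (φ : T → UnitAddCircle) (w θ : T → ℝ) (x : T) : ℝ :=
  w x - circleRep (φ x) + circleProfile (φ x) (θ x)

lemma abs_liftedIncrement_testFunction_le (hw : ∀ x, (w x : UnitAddCircle) = φ x - f x)
    (hη : η ≤ 1 / 8) (h1 : ∀ x, ‖φ x‖ < η → θ x = 1) (h0 : ∀ x, 1 / 4 ≤ ‖φ x‖ → θ x = 0)
    {x x' : T} (hφ : ‖φ x - φ x'‖ < η) (hwf : |w x - w x'| + ‖f x - f x'‖ < 1 / 2) :
    |liftedIncrement f (testFunction φ w θ) x x'| ≤ |θ x - θ x'| := by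
  refine le_of_eq_of_le ?_
    (abs_circleProfile_sub_le hη hφ (h1 x) (h0 x) (h1 x') (h0 x'))
  rw [← liftedIncrement_eq_circleRep hw (by linarith)]
  simp only [liftedIncrement, testFunction]
  ring_nf

variable [PseudoMetricSpace T] [Fintype ι]

lemma unionCutoff_eq_zero_of_norm {c y : ι → T} {r : ι → ℝ}
    (hφ : ∀ ⦃x x'⦄, dist x x' < 3 * δ → ‖φ x - φ x'‖ < 1 / 4) (hr : ∀ i, r i ≤ δ)
    (hy : ∀ i, y i ∈ φ ⁻¹' {0} ∩ ball (c i) (r i)) {x : T} (hx : 1 / 4 ≤ ‖φ x‖) :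
    unionCutoff c r x = 0 := by
  refine unionCutoff_eq_zero (fun i => pos_of_mem_ball (hy i).2) fun i => ?_
  obtain ⟨hzero, hyc⟩ := hy i
  by_contra! hlt
  have hnorm := hφ (x := x) (x' := y i)
    (by linarith [hr i, mem_ball.1 hyc, dist_triangle_right x (y i) (c i)])
  rw [mem_preimage, mem_singleton_iff] at hzero
  rw [hzero, sub_zero] at hnorm
  linarith

lemma exists_forall_norm_lt_imp_mem [CompactSpace T] {U : Set T} (hφ : Continuous φ)
    (hU : IsOpen U) (hsub : φ ⁻¹' {0} ⊆ U) : ∃ η > 0, ∀ x, ‖φ x‖ < η → x ∈ U := by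
  obtain ⟨η, hη, hle⟩ := hU.isClosed_compl.isCompact.exists_forall_le' hφ.norm.continuousOn
    (a := 0) fun x hx => norm_pos_iff.2 fun h0 => hx (hsub h0)
  exact ⟨η, hη, fun x hx => by_contra fun hxU => (hle x hxU).not_gt hx⟩

lemma isLocalSlope_testFunction [CompactSpace T] (hφ : Continuous φ) (hf : Continuous f)
    (hw : Continuous w) (hwφ : ∀ x, (w x : UnitAddCircle) = φ x - f x)
    (hδ : ∀ ⦃x x'⦄, dist x x' < 3 * δ → ‖φ x - φ x'‖ < 1 / 4) {c y : ι → T} {r : ι → ℝ}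
    (hr : ∀ i, r i ≤ δ) (hcov : φ ⁻¹' {0} ⊆ ⋃ i, ball (c i) (r i))
    (hy : ∀ i, y i ∈ φ ⁻¹' {0} ∩ ball (c i) (r i)) :
    ∃ ε > 0, IsLocalSlope f (testFunction φ w (unionCutoff c r)) (coverDensity c r) ε := by
  have hr0 : ∀ i, 0 < r i := fun i => pos_of_mem_ball (hy i).2
  obtain ⟨η, hη, hmem⟩ := exists_forall_norm_lt_imp_mem hφ (isOpen_iUnion fun _ => isOpen_ball) hcov
  have hmin : 0 < min η (1 / 8) := lt_min hη (by norm_num)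
  have hone : ∀ x, ‖φ x‖ < min η (1 / 8) → unionCutoff c r x = 1 := fun x hx =>
    unionCutoff_eq_one hr0 (hmem x (hx.trans_le (min_le_left _ _)))
  have hcont : Continuous fun x => (φ x, f x, w x) := by fun_prop
  obtain ⟨ε₁, hε₁, hunif⟩ := Metric.uniformContinuous_iff.1
    (CompactSpace.uniformContinuous_of_continuous hcont) _ hmin
  obtain ⟨ε₀, hε₀r, hε₀⟩ : ∃ ε₀, (∀ i, ε₀ ∈ Ioo 0 (r i)) ∧ 0 < ε₀ :=
    ((eventually_all.2 fun i => Ioo_mem_nhdsGT (hr0 i)).and self_mem_nhdsWithin).exists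
  refine ⟨min ε₀ ε₁, lt_min hε₀ hε₁, fun x x' hxx' => ?_⟩
  have hclose := hunif (hxx'.trans_le (min_le_right _ _))
  rw [Prod.dist_eq, sup_lt_iff, Prod.dist_eq, sup_lt_iff, dist_eq_norm, dist_eq_norm,
    Real.dist_eq] at hclose
  obtain ⟨hφx, hfx, hwx⟩ := hclose
  refine (abs_liftedIncrement_testFunction_le hwφ (min_le_right η _) hone
    (fun x => unionCutoff_eq_zero_of_norm hδ hr hy) hφx ?_).trans
    (abs_unionCutoff_sub_le hr0 fun i =>
      (hxx'.trans_le (min_le_left _ _)).trans (hε₀r i).2)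
  linarith [min_le_right η (1 / 8)]

lemma exists_isLocalSlope_coverDensity [CompactSpace T] (hφ : Continuous φ) (hf : Continuous f)
    (hw : Continuous w) (hwφ : ∀ x, (w x : UnitAddCircle) = φ x - f x) :
    ∃ δ > 0, ∀ {ι : Type*} [Fintype ι] {c y : ι → T} {r : ι → ℝ}, (∀ i, r i ≤ δ) →
      φ ⁻¹' {0} ⊆ ⋃ i, ball (c i) (r i) → (∀ i, y i ∈ φ ⁻¹' {0} ∩ ball (c i) (r i)) →
      ∃ v : T → ℝ, ∃ ε > 0, IsLocalSlope f v (coverDensity c r) ε := by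
  obtain ⟨δ, hδ, hφδ⟩ := Metric.uniformContinuous_iff.1
    (CompactSpace.uniformContinuous_of_continuous hφ) (1 / 4) (by norm_num)
  refine ⟨δ / 3, by positivity, fun hr hcov hy =>
    ⟨_, isLocalSlope_testFunction hφ hf hw hwφ (fun x x' hxx' => ?_) hr hcov hy⟩⟩
  rw [← dist_eq_norm]
  exact hφδ (by linarith)

end TestFunction

/-! ### Mollification -/

lemma abs_integral_mul_le_mul_setIntegral_abs {X : Type*} [MeasurableSpace X] {μ : Measure X}
    {g u : X → ℝ} {s : Set X} {L : ℝ} (hs : MeasurableSet s) (hu : Integrable u μ)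
    (hgu : Integrable (fun y => g y * u y) μ) (hgL : ∀ y ∈ s, |g y| ≤ L)
    (hg0 : ∀ y ∉ s, g y = 0) : |∫ y, g y * u y ∂μ| ≤ L * ∫ y in s, |u y| ∂μ := by
  rw [← setIntegral_eq_integral_of_forall_compl_eq_zero (s := s)
    fun y hy => by rw [hg0 y hy, zero_mul], ← integral_const_mul]
  refine abs_integral_le_integral_abs.trans (setIntegral_mono_on hgu.abs.integrableOn
    (hu.abs.const_mul L).integrableOn hs fun y hy => ?_)
  rw [abs_mul]
  exact mul_le_mul_of_nonneg_right (hgL y hy) (abs_nonneg _)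

lemma abs_div_sub_div_le {a b s t : ℝ} (hs : 0 < s) (ht : 0 < t) :
    |a / s - b / t| ≤ |a - b| / s + |b| * |s - t| / (s * t) := by
  have hsplit : a / s - b / t = (a - b) / s + b * (t - s) / (s * t) := by
    field_simp
    ring
  rw [hsplit]
  refine (abs_add_le _ _).trans (le_of_eq ?_)
  rw [abs_div, abs_div, abs_mul, abs_of_pos hs, abs_of_pos (mul_pos hs ht), abs_sub_comm t]

/-- The tent function of radius `2 * ε` around `x`. -/
def tent {T : Type*} [PseudoMetricSpace T] (ε : ℝ) (x y : T) : ℝ := max 0 (2 * ε - dist x y)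

section Tent

variable {T : Type*} [PseudoMetricSpace T] {ε : ℝ} {x x' z : T}

lemma tent_nonneg (ε : ℝ) (x y : T) : 0 ≤ tent ε x y := le_max_left _ _

lemma tent_le (hε : 0 < ε) (x y : T) : tent ε x y ≤ 2 * ε :=
  max_le (by positivity) (by linarith [dist_nonneg (x := x) (y := y)])

lemma tent_eq_zero {y : T} (h : 2 * ε ≤ dist x y) : tent ε x y = 0 :=
  max_eq_left (by linarith)

lemma tent_eq_zero_of_notMem {y : T} (hx : x ∈ ball z (2 * ε)) (hy : y ∉ ball z (4 * ε)) :
    tent ε x y = 0 := by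
  rw [mem_ball, not_lt] at hy
  exact tent_eq_zero (by linarith [mem_ball.1 hx, dist_triangle_left y z x])

lemma continuous_tent (ε : ℝ) (x : T) : Continuous (tent ε x) := by
  unfold tent
  fun_prop

lemma abs_tent_sub_le (ε : ℝ) (x x' y : T) : |tent ε x y - tent ε x' y| ≤ dist x x' := by
  calc |tent ε x y - tent ε x' y| ≤ |(2 * ε - dist x y) - (2 * ε - dist x' y)| := by
        simpa [tent] using abs_max_sub_max_le_max 0 (2 * ε - dist x y) 0 (2 * ε - dist x' y)
    _ = |dist x' y - dist x y| := by
        congr 1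
        ring
    _ ≤ dist x x' := by
        rw [dist_comm x x']
        exact abs_dist_sub_le x' x y

variable [MeasurableSpace T] [BorelSpace T] {μ : Measure T} {u u' : T → ℝ}

lemma integrable_tent_mul (hε : 0 < ε) (hu : Integrable u μ) (x : T) :
    Integrable (fun y => tent ε x y * u y) μ := by
  refine hu.bdd_mul (c := 2 * ε) (continuous_tent ε x).measurable.aestronglyMeasurable
    (Eventually.of_forall fun y => ?_)
  rw [Real.norm_eq_abs, abs_of_nonneg (tent_nonneg ε x y)]
  exact tent_le hε x y

lemma integrable_tent [IsFiniteMeasure μ] (hε : 0 < ε) (x : T) : Integrable (tent ε x) μ := by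
  simpa using integrable_tent_mul hε (integrable_const (1 : ℝ)) x

lemma mul_measureReal_ball_le_integral_tent [IsFiniteMeasure μ] (hε : 0 < ε) (x : T) :
    ε * μ.real (ball x ε) ≤ ∫ y, tent ε x y ∂μ := by
  calc ε * μ.real (ball x ε) = ∫ _ in ball x ε, ε ∂μ := by
        rw [setIntegral_const, smul_eq_mul, mul_comm]
    _ ≤ ∫ y in ball x ε, tent ε x y ∂μ := by
        refine setIntegral_mono_on (integrable_const _) (integrable_tent hε x).integrableOn
          measurableSet_ball fun y hy => le_max_of_le_right ?_
        linarith [mem_ball'.1 hy]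
    _ ≤ ∫ y, tent ε x y ∂μ := setIntegral_le_integral (integrable_tent hε x)
        (Eventually.of_forall fun y => tent_nonneg ε x y)

lemma abs_integral_tent_mul_le (hε : 0 < ε) (hu : Integrable u μ) (hx : x ∈ ball z (2 * ε)) :
    |∫ y, tent ε x y * u y ∂μ| ≤ 2 * ε * ∫ y in ball z (4 * ε), |u y| ∂μ := by
  refine abs_integral_mul_le_mul_setIntegral_abs measurableSet_ball hu
    (integrable_tent_mul hε hu x) (fun y _ => ?_) fun y hy => tent_eq_zero_of_notMem hx hy
  rw [abs_of_nonneg (tent_nonneg ε x y)]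
  exact tent_le hε x y

lemma abs_integral_tent_mul_sub_le (hε : 0 < ε) (hu : Integrable u μ)
    (hx : x ∈ ball z (2 * ε)) (hx' : x' ∈ ball z (2 * ε)) :
    |∫ y, tent ε x y * u y ∂μ - ∫ y, tent ε x' y * u y ∂μ| ≤
      dist x x' * ∫ y in ball z (4 * ε), |u y| ∂μ := by
  have hint := (integrable_tent_mul hε hu x).sub (integrable_tent_mul hε hu x')
  rw [← integral_sub (integrable_tent_mul hε hu x) (integrable_tent_mul hε hu x')]
  simp only [← sub_mul]
  refine abs_integral_mul_le_mul_setIntegral_abs measurableSet_ball hu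
    (hint.congr (Eventually.of_forall fun y => (sub_mul _ _ _).symm))
    (fun y _ => abs_tent_sub_le ε x x' y) fun y hy => ?_
  rw [tent_eq_zero_of_notMem hx hy, tent_eq_zero_of_notMem hx' hy, sub_zero]

/-- The average of `u` with respect to the tent function around `x`. -/
def tentAverage (μ : Measure T) (ε : ℝ) (u : T → ℝ) (x : T) : ℝ :=
  (∫ y, tent ε x y * u y ∂μ) / ∫ y, tent ε x y ∂μ

omit [BorelSpace T] in
lemma tentAverage_congr (h : ∀ y, dist x y < 2 * ε → u y = u' y) :
    tentAverage μ ε u x = tentAverage μ ε u' x := by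
  have heq : ∀ y, tent ε x y * u y = tent ε x y * u' y := fun y => by
    rcases lt_or_ge (dist x y) (2 * ε) with hy | hy
    · rw [h y hy]
    · rw [tent_eq_zero hy, zero_mul, zero_mul]
  simp only [tentAverage, heq]

end Tent

namespace DoublingPoincare

variable {T : Type*} [MetricSpace T] [MeasurableSpace T] [BorelSpace T] {μ : Measure T} {M C : ℝ}
  {k : ℕ} {u : T → ℝ} {ε : ℝ} {x x' z : T}

lemma integral_tent_pos (h : DoublingPoincare μ M C k) (hε : 0 < ε) (x : T) :
    0 < ∫ y, tent ε x y ∂μ :=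
  have := h.finite
  (mul_pos hε (h.pos x ε hε)).trans_le (mul_measureReal_ball_le_integral_tent hε x)

lemma div_le_integral_tent (h : DoublingPoincare μ M C k) (hε : 0 < ε)
    (hx : x ∈ ball z (2 * ε)) : ε * μ.real (ball z ε) / M ^ 2 ≤ ∫ y, tent ε x y ∂μ := by
  have := h.finite
  have := h.one_le
  refine le_trans ?_ (mul_measureReal_ball_le_integral_tent hε x)
  rw [div_le_iff₀ (by positivity), mul_assoc, mul_comm (μ.real _)]
  refine mul_le_mul_of_nonneg_left ?_ hε.le
  refine (measureReal_mono (ball_subset_ball' ?_)).trans (h.doubling_pow 2 x hε)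
  linarith [mem_ball'.1 hx]

lemma tentAverage_sub_const (h : DoublingPoincare μ M C k) (hε : 0 < ε) (hu : Integrable u μ)
    (c : ℝ) (x : T) :
    tentAverage μ ε (fun y => u y - c) x = tentAverage μ ε u x - c := by
  have := h.finite
  have hpos := (h.integral_tent_pos hε x).ne'
  simp only [tentAverage, mul_sub]
  rw [integral_sub (integrable_tent_mul hε hu x) ((integrable_tent hε x).mul_const c),
    integral_mul_const, sub_div, mul_div_cancel_left₀ c hpos]

lemma abs_integral_tent_sub_le (h : DoublingPoincare μ M C k) (hε : 0 < ε)
    (hx : x ∈ ball z (2 * ε)) (hx' : x' ∈ ball z (2 * ε)) :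
    |∫ y, tent ε x y ∂μ - ∫ y, tent ε x' y ∂μ| ≤
      dist x x' * (M ^ 2 * μ.real (ball z ε)) := by
  have := h.finite
  have hsub := abs_integral_tent_mul_sub_le hε (integrable_const (μ := μ) (1 : ℝ)) hx hx'
  simp only [mul_one, abs_one, setIntegral_const, smul_eq_mul] at hsub
  refine hsub.trans (mul_le_mul_of_nonneg_left ?_ dist_nonneg)
  rw [show 4 * ε = 2 ^ 2 * ε by ring]
  exact h.doubling_pow 2 z hε

lemma abs_tentAverage_sub_le (h : DoublingPoincare μ M C k) (hε : 0 < ε) (hu : Integrable u μ)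
    (hx : x ∈ ball z (2 * ε)) (hx' : x' ∈ ball z (2 * ε)) :
    |tentAverage μ ε u x - tentAverage μ ε u x'| ≤
      3 * M ^ 6 / (ε * μ.real (ball z ε)) * (∫ y in ball z (4 * ε), |u y| ∂μ) * dist x x' := by
  have hM := h.one_le
  have hm := h.pos z ε hε
  refine (abs_div_sub_div_le (h.integral_tent_pos hε x) (h.integral_tent_pos hε x')).trans ?_
  set J := ∫ y in ball z (4 * ε), |u y| ∂μ
  set m := μ.real (ball z ε)
  have : 0 ≤ J := integral_nonneg fun _ => abs_nonneg _
  calc _ ≤ dist x x' * J / (ε * m / M ^ 2) +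
        2 * ε * J * (dist x x' * (M ^ 2 * m)) / (ε * m / M ^ 2 * (ε * m / M ^ 2)) := by
        gcongr
        · exact abs_integral_tent_mul_sub_le hε hu hx hx'
        · exact h.div_le_integral_tent hε hx
        · exact abs_integral_tent_mul_le hε hu hx'
        · exact h.abs_integral_tent_sub_le hε hx hx'
        · exact (h.integral_tent_pos hε x).le
        · exact h.div_le_integral_tent hε hx
        · exact h.div_le_integral_tent hε hx'
    _ = (M ^ 2 + 2 * M ^ 6) / (ε * m) * J * dist x x' := by field_simp
    _ ≤ 3 * M ^ 6 / (ε * m) * J * dist x x' := by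
        have : M ^ 2 ≤ M ^ 6 := pow_le_pow_right₀ hM (by norm_num)
        gcongr
        linarith

end DoublingPoincare

section Mollify

variable {T : Type*} [MetricSpace T] [MeasurableSpace T] {μ : Measure T} {M C : ℝ} {k : ℕ}
  {f : T → UnitAddCircle} {v ρ : T → ℝ} {ε ε' R : ℝ} {x x' z : T}

/-- The tent average at scale `ε` of the correction `v`, normalized by the local lifts of `f`. -/
def mollify (μ : Measure T) (ε : ℝ) (f : T → UnitAddCircle) (v : T → ℝ) (x : T) : ℝ :=
  tentAverage μ ε (localLift f v x) x

namespace DoublingPoincare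

variable [CompactSpace T] [BorelSpace T]

lemma exists_integral_abs_localLift_sub_le (h : DoublingPoincare μ M C k) (hf : Continuous f)
    (hR : 0 < R) (hosc : ∀ ⦃x y⦄, dist x y < 2 ^ k * R → ‖f x - f y‖ < 1 / 8) (hρ0 : ∀ x, 0 ≤ ρ x)
    (hρm : Measurable ρ) (hρ : Integrable ρ μ) (hε' : 0 < ε') (hv : IsLocalSlope f v ρ ε')
    (z : T) : ∃ c, ∫ y in ball z R, |localLift f v z y - c| ∂μ ≤
      C * R * ∫ y in ball z (2 ^ k * R), ρ y ∂μ := by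
  have := h.finite
  have hCR : 0 ≤ C * R := mul_nonneg h.nonneg hR.le
  have hint : Integrable (localLift f v z) μ := integrable_localLift hf (hv.continuous hε' hf) z
  have hslope : ∀ x ∈ ball z (2 ^ k * R), ∀ x', dist x x' < min ε' (2 ^ k * R) →
      edist (localLift f v z x) (localLift f v z x') ≤
        ENNReal.ofReal (ρ x) * edist x x' := fun x hx x' hxx' => by
    rw [lt_min_iff] at hxx'
    have htriangle := norm_sub_le_norm_sub_add_norm_sub (f x') (f x) (f z)
    rw [norm_sub_rev (f x') (f x)] at htriangle
    rw [edist_dist, edist_dist, Real.dist_eq,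
      localLift_sub_localLift (by linarith [hosc hx, hosc hxx'.2]), ← ENNReal.ofReal_mul (hρ0 x)]
    exact ENNReal.ofReal_le_ofReal (hv hxx'.1)
  obtain ⟨c, hc⟩ := h.exists_lintegral_abs_sub_le_of_local hint hρm.ennreal_ofReal
    (lt_min hε' (by positivity)) hR hslope
  have habs : ENNReal.ofReal (∫ y in ball z R, |localLift f v z y - c| ∂μ) =
      ∫⁻ y in ball z R, ENNReal.ofReal |localLift f v z y - c| ∂μ :=
    ofReal_integral_eq_lintegral_ofReal (hint.sub (integrable_const c)).abs.integrableOn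
      (Eventually.of_forall fun _ => abs_nonneg _)
  refine ⟨c, ?_⟩
  rw [← habs, ← ofReal_integral_eq_lintegral_ofReal hρ.integrableOn (Eventually.of_forall hρ0),
    ← ENNReal.ofReal_mul hCR] at hc
  exact (ENNReal.ofReal_le_ofReal_iff (mul_nonneg hCR (integral_nonneg fun _ => hρ0 _))).1 hc

lemma mollify_eq_tentAverage_sub (h : DoublingPoincare μ M C k) (hf : Continuous f)
    (hv : Continuous v) (hε : 0 < ε) (hosc : ∀ ⦃x y⦄, dist x y < 2 * ε → ‖f x - f y‖ < 1 / 8)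
    (hx : x ∈ ball z (2 * ε)) :
    mollify μ ε f v x = tentAverage μ ε (localLift f v z) x - circleRep (f x - f z) := by
  have := h.finite
  rw [mollify, ← h.tentAverage_sub_const hε (integrable_localLift hf hv z)]
  refine tentAverage_congr fun y hy => localLift_eq_sub ?_
  linarith [hosc ((dist_comm y x).trans_lt hy), hosc hx]

lemma liftedIncrement_mollify (h : DoublingPoincare μ M C k) (hf : Continuous f)
    (hv : Continuous v) (hε : 0 < ε) (hosc : ∀ ⦃x y⦄, dist x y < 2 * ε → ‖f x - f y‖ < 1 / 8)
    (hx : x ∈ ball z (2 * ε)) (hx' : x' ∈ ball z (2 * ε)) (hxx' : dist x x' < 2 * ε) :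
    liftedIncrement f (mollify μ ε f v) x x' =
      tentAverage μ ε (localLift f v z) x - tentAverage μ ε (localLift f v z) x' := by
  rw [liftedIncrement, h.mollify_eq_tentAverage_sub hf hv hε hosc hx,
    h.mollify_eq_tentAverage_sub hf hv hε hosc hx',
    circleRep_sub_add_sub (by linarith [hosc hxx', hosc hx'] :
      ‖f x - f x'‖ + ‖f x' - f z‖ < 1 / 2)]
  ring

lemma abs_liftedIncrement_mollify_le (h : DoublingPoincare μ M C k) (hf : Continuous f)
    (hε : 0 < ε) (hosc : ∀ ⦃x y⦄, dist x y < 2 ^ k * (4 * ε) → ‖f x - f y‖ < 1 / 8)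
    (hρ0 : ∀ x, 0 ≤ ρ x) (hρm : Measurable ρ) (hρ : Integrable ρ μ) (hε' : 0 < ε')
    (hv : IsLocalSlope f v ρ ε') (hx : x ∈ ball z ε) (hxx' : dist x x' < ε) :
    |liftedIncrement f (mollify μ ε f v) x x'| ≤
      12 * C * M ^ 6 / μ.real (ball z ε) * (∫ y in ball z (2 ^ k * (4 * ε)), ρ y ∂μ) *
        dist x x' := by
  have := h.finite
  have hM := h.one_le
  have hm := h.pos z ε hε
  have hvc := hv.continuous hε' hf
  have hint : Integrable (localLift f v z) μ := integrable_localLift hf hvc z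
  have hle : 4 * ε ≤ 2 ^ k * (4 * ε) :=
    le_mul_of_one_le_left (by positivity) (one_le_pow₀ one_le_two)
  have hx2 : x ∈ ball z (2 * ε) := ball_subset_ball (by linarith) hx
  have hx2' : x' ∈ ball z (2 * ε) := by
    rw [mem_ball]
    linarith [mem_ball.1 hx, dist_triangle_left x' z x]
  obtain ⟨c, hc⟩ :=
    h.exists_integral_abs_localLift_sub_le hf (by positivity) hosc hρ0 hρm hρ hε' hv z
  have hoscε : ∀ ⦃x y⦄, dist x y < 2 * ε → ‖f x - f y‖ < 1 / 8 := fun x y hxy =>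
    hosc (by linarith)
  have hav := h.abs_tentAverage_sub_le hε (hint.sub (integrable_const c)) hx2 hx2'
  simp only [Pi.sub_apply] at hav
  rw [h.liftedIncrement_mollify hf hvc hε hoscε hx2 hx2' (by linarith)]
  calc _ = |tentAverage μ ε (fun y => localLift f v z y - c) x -
          tentAverage μ ε (fun y => localLift f v z y - c) x'| := by
        rw [h.tentAverage_sub_const hε hint, h.tentAverage_sub_const hε hint,
          sub_sub_sub_cancel_right]
    _ ≤ _ := hav
    _ ≤ 3 * M ^ 6 / (ε * μ.real (ball z ε)) *
        (C * (4 * ε) * ∫ y in ball z (2 ^ k * (4 * ε)), ρ y ∂μ) * dist x x' := by gcongr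
    _ = _ := by
        field_simp
        ring

end DoublingPoincare

end Mollify

/-! ### Capacity and competitors -/

lemma IsUpperGradient.isWeakUpperGradient {X Y : Type*} [PseudoMetricSpace X] [MeasurableSpace X]
    [PseudoEMetricSpace Y] {u : X → Y} {ρ : X → ℝ≥0∞} (h : IsUpperGradient u ρ)
    (μ : Measure X) {p : ℝ} (hp : 0 < p) : IsWeakUpperGradient μ p u ρ := by
  rw [IsWeakUpperGradient, ← nonpos_iff_eq_zero, pathMod]
  refine (iInf₂_le (fun _ => 0) ⟨measurable_const, fun γ hγ => absurd (h γ) hγ⟩).trans ?_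
  simp [hp]

section Capacity

variable {T : Type*} [MetricSpace T] [MeasurableSpace T] {μ : Measure T} {p ε : ℝ} {x₀ : T}
  {α₀ : Path x₀ x₀} {f : T → UnitAddCircle}

lemma cap_le_lintegral {ρ : T → ℝ≥0∞} (hp : 0 < p) (hf : DegOneLip x₀ α₀ f) (hρ : Measurable ρ)
    (h : IsUpperGradient f ρ) : cap μ p x₀ α₀ ≤ ∫⁻ x, ρ x ^ p ∂μ :=
  (iInf₂_le f hf).trans (iInf₂_le ρ ⟨hρ, h.isWeakUpperGradient μ hp⟩)

lemma cap_lt_top [IsFiniteMeasure μ] (hp : 0 < p) (hf : DegOneLip x₀ α₀ f) :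
    cap μ p x₀ α₀ < ⊤ := by
  obtain ⟨L, hL⟩ := hf.1
  have hug : IsUpperGradient f fun _ => (L : ℝ≥0∞) :=
    isUpperGradient_of_local one_pos fun x x' _ => hL x x'
  refine (cap_le_lintegral hp hf measurable_const hug).trans_lt ?_
  rw [lintegral_const]
  exact ENNReal.mul_lt_top (ENNReal.rpow_lt_top_of_nonneg hp.le ENNReal.coe_ne_top)
    (measure_lt_top μ _)

lemma IsLocalSlope.cap_le [CompactSpace T] {v ρ : T → ℝ} {L : ℝ}
    (h : IsLocalSlope f v ρ ε) (hε : 0 < ε) (hp : 0 < p) (hf : HasDegree x₀ α₀ f 1)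
    (hρ : Measurable ρ) (hρ0 : ∀ x, 0 ≤ ρ x) (hρL : ∀ x, ρ x ≤ L) :
    cap μ p x₀ α₀ ≤ ∫⁻ x, ENNReal.ofReal (ρ x) ^ p ∂μ := by
  have hlip : ∃ K, LipschitzWith K fun x => f x + (v x : UnitAddCircle) :=
    exists_lipschitzWith_of_local (L := L.toNNReal) hε fun x x' hd =>
      (h.edist_add_coe_le (hρ0 x) hd).trans <| by
        gcongr
        exact ENNReal.ofReal_le_ofReal (hρL x)
  obtain ⟨hfc, -⟩ := id hf
  exact cap_le_lintegral hp ⟨hlip, hf.add_coe (h.continuous hε hfc)⟩ hρ.ennreal_ofReal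
    (isUpperGradient_of_local hε fun x x' hd => h.edist_add_coe_le (hρ0 x) hd)

end Capacity

section Competitors

variable {T ι : Type*} [MetricSpace T] {f : T → UnitAddCircle} {ε : ℝ} {z : ι → T} {a : ι → ℝ}

/-- The slopes `a i` such that for some correction `v` the map `f + v` is `a i`-Lipschitz around
each point of `ball (z i) ε`. -/
def competitorSlopes (f : T → UnitAddCircle) (ε : ℝ) (z : ι → T) : Set (ι → ℝ) :=
  {a | 0 ≤ a ∧ ∃ v : T → ℝ, ∀ i, ∀ x ∈ ball (z i) ε, ∀ x', dist x x' < ε →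
    |liftedIncrement f v x x'| ≤ a i * dist x x'}

lemma convex_competitorSlopes (f : T → UnitAddCircle) (ε : ℝ) (z : ι → T) :
    Convex ℝ (competitorSlopes f ε z) := by
  rintro a ⟨ha, v, hv⟩ b ⟨hb, w, hw⟩ s t hs ht hst
  refine ⟨add_nonneg (smul_nonneg hs ha) (smul_nonneg ht hb), s • v + t • w,
    fun i x hx x' hd => ?_⟩
  rw [liftedIncrement_smul_add_smul hst]
  calc |s * liftedIncrement f v x x' + t * liftedIncrement f w x x'|
      ≤ s * |liftedIncrement f v x x'| + t * |liftedIncrement f w x x'| := by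
        refine (abs_add_le _ _).trans_eq ?_
        rw [abs_mul, abs_mul, abs_of_nonneg hs, abs_of_nonneg ht]
    _ ≤ s * (a i * dist x x') + t * (b i * dist x x') := by
        gcongr
        · exact hv i x hx x' hd
        · exact hw i x hx x' hd
    _ = (s • a + t • b) i * dist x x' := by
        simp only [Pi.add_apply, Pi.smul_apply, smul_eq_mul]
        ring

variable [Fintype ι]

lemma exists_isLocalSlope_ballSum (hz : ⋃ i, ball (z i) ε = univ)
    (ha : a ∈ competitorSlopes f ε z) :
    ∃ v, IsLocalSlope f v (ballSum z (fun _ => ε) a) ε := by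
  obtain ⟨ha0, v, hv⟩ := ha
  refine ⟨v, fun x x' hd => ?_⟩
  obtain ⟨i, hi⟩ := mem_iUnion.1 (hz.ge (mem_univ x))
  exact (hv i x hi x' hd).trans
    (mul_le_mul_of_nonneg_right (le_ballSum ha0 hi) dist_nonneg)

variable [CompactSpace T] [MeasurableSpace T] [BorelSpace T] {μ : Measure T} [IsFiniteMeasure μ]
  {p N : ℝ} {x₀ : T} {α₀ : Path x₀ x₀}

lemma cap_le_of_mem_competitorSlopes (hp : 1 ≤ p) (hf : HasDegree x₀ α₀ f 1) (hε : 0 < ε)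
    (hz : ⋃ i, ball (z i) ε = univ) (hN : ∀ x, ballSum z (fun _ => ε) 1 x ≤ N)
    (ha : a ∈ competitorSlopes f ε z) :
    cap μ p x₀ α₀ ≤ ENNReal.ofReal (N ^ (p - 1) * ∑ i, μ.real (ball (z i) ε) * a i ^ p) := by
  obtain ⟨v, hv⟩ := exists_isLocalSlope_ballSum hz ha
  exact (hv.cap_le hε (by linarith) hf (measurable_ballSum _ _ _)
    (ballSum_nonneg ha.1) (ballSum_le_sum ha.1)).trans (lintegral_ballSum_rpow_le hp ha.1 hN)

lemma div_le_sum_of_mem_competitorSlopes (hp : 1 ≤ p) (hf : HasDegree x₀ α₀ f 1) (hε : 0 < ε)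
    (hz : ⋃ i, ball (z i) ε = univ) (hN0 : 0 < N) (hN : ∀ x, ballSum z (fun _ => ε) 1 x ≤ N)
    (ha : a ∈ competitorSlopes f ε z) :
    (cap μ p x₀ α₀).toReal / N ^ (p - 1) ≤ ∑ i, μ.real (ball (z i) ε) * a i ^ p := by
  have hsum : 0 ≤ ∑ i, μ.real (ball (z i) ε) * a i ^ p := Finset.sum_nonneg fun i _ =>
    mul_nonneg measureReal_nonneg (Real.rpow_nonneg (ha.1 i) p)
  rw [div_le_iff₀' (by positivity)]
  exact ENNReal.toReal_le_of_le_ofReal (by positivity)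
    (cap_le_of_mem_competitorSlopes hp hf hε hz hN ha)

end Competitors

/-! ### Duality between slopes and surfaces -/

namespace DoublingPoincare

variable {T ι κ : Type*} [MetricSpace T] [MeasurableSpace T] [BorelSpace T] {μ : Measure T}
  {M C R : ℝ} {k : ℕ} [Fintype ι] {c y : ι → T} {r : ι → ℝ}

lemma setIntegral_coverDensity_le (h : DoublingPoincare μ M C k) (hr : ∀ i, r i ≤ R / 4)
    (hy : ∀ i, y i ∈ ball (c i) (r i)) (z : T) :
    ∫ x in ball z R, coverDensity c r x ∂μ ≤
      M ^ 2 * ∑ i, μ.real (ball (c i) (r i)) / r i * (ball z (2 * R)).indicator 1 (y i) := by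
  have := h.finite
  simp only [coverDensity, ballSum]
  rw [integral_finsetSum _ fun i _ => (integrable_const _).indicator measurableSet_ball,
    Finset.mul_sum]
  refine Finset.sum_le_sum fun i _ => ?_
  have hri : 0 < r i := pos_of_mem_ball (hy i)
  rw [integral_indicator_const _ measurableSet_ball, smul_eq_mul,
    measureReal_restrict_apply measurableSet_ball]
  rcases (ball (c i) (3 * r i) ∩ ball z R).eq_empty_or_nonempty with hempty | ⟨x, hx, hxz⟩
  · have hind : 0 ≤ (ball z (2 * R)).indicator (1 : T → ℝ) (y i) :=
      indicator_nonneg (fun _ _ => zero_le_one) _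
    rw [hempty, measureReal_empty, zero_mul]
    positivity
  · have hyz : y i ∈ ball z (2 * R) := by
      have hyc := hy i
      rw [mem_ball] at hx hxz hyc ⊢
      linarith [hr i, dist_triangle_right (y i) x (c i), dist_triangle (y i) x z]
    rw [indicator_of_mem hyz, Pi.one_apply, mul_one, ← mul_div_assoc, ← div_eq_mul_inv]
    gcongr
    refine (measureReal_mono (inter_subset_left.trans (ball_subset_ball ?_))).trans
      (h.doubling_pow 2 (c i) hri)
    linarith

lemma sum_mul_setIntegral_coverDensity_le [Fintype κ] (h : DoublingPoincare μ M C k)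
    (hr : ∀ i, r i ≤ R / 4) (hy : ∀ i, y i ∈ ball (c i) (r i)) (z : κ → T) {b : κ → ℝ}
    (hb : 0 ≤ b) :
    ∑ j, b j * ∫ x in ball (z j) R, coverDensity c r x ∂μ ≤
      M ^ 2 * ∑ i, μ.real (ball (c i) (r i)) / r i * ballSum z (fun _ => 2 * R) b (y i) := by
  calc ∑ j, b j * ∫ x in ball (z j) R, coverDensity c r x ∂μ
      ≤ ∑ j, b j * (M ^ 2 * ∑ i, μ.real (ball (c i) (r i)) / r i *
          (ball (z j) (2 * R)).indicator 1 (y i)) :=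
        Finset.sum_le_sum fun j _ =>
          mul_le_mul_of_nonneg_left (h.setIntegral_coverDensity_le hr hy (z j)) (hb j)
    _ = _ := by
        simp only [ballSum, Finset.mul_sum]
        rw [Finset.sum_comm]
        refine Finset.sum_congr rfl fun i _ => Finset.sum_congr rfl fun j _ => ?_
        by_cases hij : y i ∈ ball (z j) (2 * R)
        · simp only [indicator_of_mem hij, Pi.one_apply]
          ring
        · simp only [indicator_of_notMem hij, mul_zero]

end DoublingPoincare

lemma leRiemannSums_ofReal {T : Type*} [MetricSpace T] [MeasurableSpace T] {μ : Measure T}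
    [IsFiniteMeasure μ] {S : Set T} {G : T → ℝ} {X δ : ℝ} (hG : ∀ x, 0 ≤ G x)
    (h : ∀ (ι : Type) [Fintype ι] (c : ι → T) (r : ι → ℝ) (y : ι → T), (∀ i, r i ≤ δ) →
      S ⊆ ⋃ i, ball (c i) (r i) → (∀ i, y i ∈ S ∩ ball (c i) (r i)) →
        X ≤ ∑ i, μ.real (ball (c i) (r i)) / r i * G (y i)) :
    LeRiemannSums μ S (fun x => ENNReal.ofReal (G x)) (ENNReal.ofReal X) δ := by
  intro ι _ c r y hr hcov hy
  have hr0 : ∀ i, 0 < r i := fun i => pos_of_mem_ball (hy i).2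
  refine (ENNReal.ofReal_le_ofReal (h ι c r y hr hcov hy)).trans_eq ?_
  rw [ENNReal.ofReal_sum_of_nonneg fun i _ =>
    mul_nonneg (div_nonneg measureReal_nonneg (hr0 i).le) (hG _)]
  refine Finset.sum_congr rfl fun i _ => ?_
  rw [ENNReal.ofReal_mul (div_nonneg measureReal_nonneg (hr0 i).le),
    ENNReal.ofReal_div_of_pos (hr0 i), ofReal_measureReal]

lemma div_rpow_sub_one_rpow {p c N : ℝ} (hp : 1 < p) (hc : 0 ≤ c) (hN : 0 ≤ N) :
    (c / N ^ (p - 1)) ^ (1 - p / (p - 1)) = N * c ^ (1 - p / (p - 1)) := by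
  have hexp : (p - 1) * (1 - p / (p - 1)) = -1 := by
    have : p - 1 ≠ 0 := by linarith
    field_simp
    ring
  rw [Real.div_rpow hc (by positivity), ← Real.rpow_mul hN, hexp, Real.rpow_neg_one,
    div_inv_eq_mul, mul_comm]

namespace DoublingPoincare

variable {T ι : Type*} [MetricSpace T] [MeasurableSpace T] [BorelSpace T] [CompactSpace T]
  {μ : Measure T} {M C ε : ℝ} {k : ℕ} {f φ : T → UnitAddCircle} {z : ι → T} {b : ι → ℝ} {x₀ : T}
  {α₀ : Path x₀ x₀}

lemma exists_mem_competitorSlopes (h : DoublingPoincare μ M C k) (hf : Continuous f)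
    (hε : 0 < ε) (hosc : ∀ ⦃x y⦄, dist x y < 2 ^ k * (4 * ε) → ‖f x - f y‖ < 1 / 8)
    {v ρ : T → ℝ} {ε' : ℝ} (hρ0 : ∀ x, 0 ≤ ρ x) (hρm : Measurable ρ) (hρ : Integrable ρ μ)
    (hε' : 0 < ε') (hv : IsLocalSlope f v ρ ε') (z : ι → T) :
    (fun j => 12 * C * M ^ 6 / μ.real (ball (z j) ε) *
      ∫ y in ball (z j) (2 ^ k * (4 * ε)), ρ y ∂μ) ∈ competitorSlopes f ε z := by
  have := h.one_le
  have := h.nonneg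
  refine ⟨fun j => mul_nonneg (by positivity) (integral_nonneg hρ0), mollify μ ε f v, ?_⟩
  exact fun j x hx x' hd =>
    h.abs_liftedIncrement_mollify_le hf hε hosc hρ0 hρm hρ hε' hv hx hd

variable [Fintype ι]

lemma one_le_mul_sum_mul_setIntegral (h : DoublingPoincare μ M C k) (hf : Continuous f)
    (hε : 0 < ε) (hosc : ∀ ⦃x y⦄, dist x y < 2 ^ k * (4 * ε) → ‖f x - f y‖ < 1 / 8)
    (hb : ∀ a ∈ competitorSlopes f ε z, 1 ≤ ∑ j, μ.real (ball (z j) ε) * b j * a j)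
    {v ρ : T → ℝ} {ε' : ℝ} (hρ0 : ∀ x, 0 ≤ ρ x) (hρm : Measurable ρ) (hρ : Integrable ρ μ)
    (hε' : 0 < ε') (hv : IsLocalSlope f v ρ ε') :
    1 ≤ 12 * C * M ^ 6 * ∑ j, b j * ∫ y in ball (z j) (2 ^ k * (4 * ε)), ρ y ∂μ := by
  refine (hb _ (h.exists_mem_competitorSlopes hf hε hosc hρ0 hρm hρ hε' hv z)).trans_eq ?_
  rw [Finset.mul_sum]
  refine Finset.sum_congr rfl fun j _ => ?_
  have := (h.pos (z j) ε hε).ne'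
  field_simp

lemma exists_leRiemannSums (h : DoublingPoincare μ M C k)
    (hα : IsGenerator x₀ α₀) (hf : HasDegree x₀ α₀ f 1) (hφ : HasDegree x₀ α₀ φ 1) (hε : 0 < ε)
    (hosc : ∀ ⦃x y⦄, dist x y < 2 ^ k * (4 * ε) → ‖f x - f y‖ < 1 / 8) (hb0 : 0 ≤ b)
    (hb : ∀ a ∈ competitorSlopes f ε z, 1 ≤ ∑ j, μ.real (ball (z j) ε) * b j * a j) :
    ∃ δ > 0, LeRiemannSums μ (φ ⁻¹' {0}) (fun x => ENNReal.ofReal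
      (48 * C * M ^ 8 * ballSum z (fun _ => 2 ^ (k + 3) * ε) b x)) 4 δ := by
  have := h.finite
  have := h.one_le
  have := h.nonneg
  have : Nonempty T := ⟨x₀⟩
  have := h.pathConnectedSpace
  have := h.locallyPathConnectedSpace
  obtain ⟨w, hw⟩ := hα.exists_lift_sub hφ hf
  obtain ⟨hfc, -⟩ := id hf
  obtain ⟨hφc, -⟩ := id hφ
  obtain ⟨δ, hδ, htest⟩ := exists_isLocalSlope_coverDensity hφc hfc w.continuous hw
  set R := 2 ^ k * (4 * ε) with hR
  have htwo : 2 * R = 2 ^ (k + 3) * ε := by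
    rw [hR]
    ring
  refine ⟨min δ (R / 4), by positivity, ?_⟩
  rw [← ENNReal.ofReal_ofNat, ← htwo]
  refine leRiemannSums_ofReal (fun x => mul_nonneg (by positivity) (ballSum_nonneg hb0 x))
    fun κ _ c r y hr hcov hy => ?_
  obtain ⟨v, ε', hε', hv⟩ := htest (fun i => (hr i).trans (min_le_left _ _)) hcov hy
  have hr0 : ∀ i, 0 < r i := fun i => pos_of_mem_ball (hy i).2
  have hone := h.one_le_mul_sum_mul_setIntegral hfc hε hosc hb (coverDensity_nonneg hr0)
    (measurable_ballSum c _ _) (integrable_ballSum μ c _ _) hε' hv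
  have hsum := h.sum_mul_setIntegral_coverDensity_le
    (fun i => (hr i).trans (min_le_right _ _)) (fun i => (hy i).2) z hb0
  calc (4 : ℝ) ≤ 4 * (12 * C * M ^ 6 *
        ∑ j, b j * ∫ x in ball (z j) R, coverDensity c r x ∂μ) := by linarith
    _ ≤ 4 * (12 * C * M ^ 6 * (M ^ 2 * ∑ i, μ.real (ball (c i) (r i)) / r i *
        ballSum z (fun _ => 2 * R) b (y i))) := by gcongr
    _ = _ := by
        simp only [Finset.mul_sum]
        exact Finset.sum_congr rfl fun i _ => by ring

lemma one_le_choquetIntegral (h : DoublingPoincare μ M C k)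
    (hα : IsGenerator x₀ α₀) (hf : HasDegree x₀ α₀ f 1) (hε : 0 < ε)
    (hosc : ∀ ⦃x y⦄, dist x y < 2 ^ k * (4 * ε) → ‖f x - f y‖ < 1 / 8) (hb0 : 0 ≤ b)
    (hb : ∀ a ∈ competitorSlopes f ε z, 1 ≤ ∑ j, μ.real (ball (z j) ε) * b j * a j)
    {S : Set T} (hS : S ∈ Surfaces μ x₀ α₀) :
    1 ≤ choquetIntegral μ S fun x => ENNReal.ofReal
      (48 * C * M ^ 8 * ballSum z (fun _ => 2 ^ (k + 3) * ε) b x) := by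
  obtain ⟨φ, hφ, rfl, hH⟩ := hS
  obtain ⟨δ, hδ, hsums⟩ := h.exists_leRiemannSums hα hf hφ hε hosc hb0 hb
  obtain ⟨hφc, -⟩ := id hφ
  have hle := hsums.le_choquetIntegral (isClosed_singleton.preimage hφc).isCompact hH
    (fun _ => ENNReal.ofReal_ne_top) hδ
  exact (ENNReal.mul_le_mul_iff_right four_ne_zero ENNReal.ofNat_ne_top).1
    ((mul_one 4).trans_le hle)

lemma surfMod_le_sum (h : DoublingPoincare μ M C k) (hα : IsGenerator x₀ α₀)
    (hf : HasDegree x₀ α₀ f 1) (hε : 0 < ε)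
    (hosc : ∀ ⦃x y⦄, dist x y < 2 ^ k * (4 * ε) → ‖f x - f y‖ < 1 / 8) {N q : ℝ} (hq : 1 ≤ q)
    (hN : ∀ x, ballSum z (fun _ => 2 ^ (k + 3) * ε) 1 x ≤ N) (hb0 : 0 ≤ b)
    (hb : ∀ a ∈ competitorSlopes f ε z, 1 ≤ ∑ j, μ.real (ball (z j) ε) * b j * a j) :
    surfMod μ q x₀ α₀ ≤ ENNReal.ofReal ((48 * C * M ^ 8) ^ q * N ^ (q - 1) * M ^ (k + 3) *
      ∑ j, μ.real (ball (z j) ε) * b j ^ q) := by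
  have := h.finite
  have := h.one_le
  have := h.nonneg
  have hq0 : 0 ≤ q := by linarith
  set A := 48 * C * M ^ 8
  set G := ballSum z (fun _ => 2 ^ (k + 3) * ε) b
  have hA0 : 0 ≤ A := by positivity
  have hGm : Measurable G := measurable_ballSum _ _ _
  have hN0 : 0 ≤ N := (ballSum_nonneg zero_le_one x₀).trans (hN x₀)
  calc surfMod μ q x₀ α₀ ≤ ∫⁻ x, ENNReal.ofReal (A * G x) ^ q ∂μ :=
        iInf₂_le _ ⟨(hGm.const_mul A).ennreal_ofReal, fun S hS =>
          h.one_le_choquetIntegral hα hf hε hosc hb0 hb hS⟩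
    _ = ENNReal.ofReal (A ^ q) * ∫⁻ x, ENNReal.ofReal (G x) ^ q ∂μ := by
        rw [← lintegral_const_mul _ (hGm.ennreal_ofReal.pow_const q)]
        refine lintegral_congr fun x => ?_
        rw [ENNReal.ofReal_mul hA0, ENNReal.mul_rpow_of_nonneg _ _ hq0,
          ENNReal.ofReal_rpow_of_nonneg hA0 hq0]
    _ ≤ ENNReal.ofReal (A ^ q) * ENNReal.ofReal
          (N ^ (q - 1) * ∑ j, μ.real (ball (z j) (2 ^ (k + 3) * ε)) * b j ^ q) := by
        gcongr
        exact lintegral_ballSum_rpow_le hq hb0 hN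
    _ ≤ ENNReal.ofReal (A ^ q) * ENNReal.ofReal
          (N ^ (q - 1) * ∑ j, M ^ (k + 3) * μ.real (ball (z j) ε) * b j ^ q) := by
        gcongr with j
        · exact Real.rpow_nonneg (hb0 j) q
        · exact h.doubling_pow (k + 3) (z j) hε
    _ = _ := by
        rw [← ENNReal.ofReal_mul (by positivity)]
        simp only [mul_assoc, Finset.mul_sum]

/-! ### The upper bound -/

lemma surfMod_le (h : DoublingPoincare μ M C k) (hα : IsGenerator x₀ α₀)
    (hf : DegOneLip x₀ α₀ f) {p : ℝ} (hp : 1 < p) (hcap : cap μ p x₀ α₀ ≠ 0) :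
    surfMod μ (p / (p - 1)) x₀ α₀ ≤
      ENNReal.ofReal ((48 * C * M ^ 8 * M ^ (k + 7)) ^ (p / (p - 1)) * M ^ (k + 3) *
        (cap μ p x₀ α₀).toReal ^ (1 - p / (p - 1))) := by
  have := h.finite
  have hM := h.one_le
  have hC := h.nonneg
  have hp1 : 0 < p - 1 := by linarith
  have hc0 : 0 < (cap μ p x₀ α₀).toReal :=
    ENNReal.toReal_pos hcap (cap_lt_top (by linarith) hf).ne
  set c := (cap μ p x₀ α₀).toReal
  set q := p / (p - 1)
  set N := M ^ (k + 7)
  have hq1 : 1 ≤ q := (one_le_div hp1).2 (by linarith)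
  have hN0 : 0 < N := by positivity
  obtain ⟨r, hr, hosc⟩ := Metric.uniformContinuous_iff.1
    (CompactSpace.uniformContinuous_of_continuous hf.1.choose_spec.continuous) (1 / 8)
    (by norm_num)
  simp only [dist_eq_norm] at hosc
  obtain ⟨ε, hε, rfl⟩ : ∃ ε > 0, 2 ^ k * (4 * ε) = r :=
    ⟨r / (4 * 2 ^ k), by positivity, by field_simp⟩
  obtain ⟨s, hs, hsep⟩ := exists_separated_net T hε
  have hle : ∀ a ∈ competitorSlopes f ε ((↑) : s → T),
      c / N ^ (p - 1) ≤ ∑ z : s, μ.real (ball (z : T) ε) * a z ^ p := fun a ha =>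
    div_le_sum_of_mem_competitorSlopes hp.le hf.2 hε hs hN0 (fun x => by
      simpa using (h.ballSum_one_le hε hsep 0 x).trans (pow_le_pow_right₀ hM (by omega))) ha
  obtain ⟨b, hb0, hb1, hbq⟩ := exists_dual_weights (fun z : s => h.pos (z : T) ε hε) hp
    (div_pos hc0 (by positivity)) (convex_competitorSlopes f ε _) (fun a ha => ha.1) hle
  refine (h.surfMod_le_sum hα hf.2 hε hosc hq1 (h.ballSum_one_le hε hsep (k + 3)) hb0
    hb1).trans (ENNReal.ofReal_le_ofReal ?_)
  calc _ ≤ (48 * C * M ^ 8) ^ q * N ^ (q - 1) * M ^ (k + 3) * (N * c ^ (1 - q)) := by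
        rw [← div_rpow_sub_one_rpow hp hc0.le hN0.le]
        gcongr
    _ = (48 * C * M ^ 8) ^ q * (N ^ (q - 1) * N) * M ^ (k + 3) * c ^ (1 - q) := by ring
    _ = (48 * C * M ^ 8 * N) ^ q * M ^ (k + 3) * c ^ (1 - q) := by
        rw [← Real.rpow_add_one hN0.ne', sub_add_cancel, Real.mul_rpow (by positivity) hN0.le]

lemma cap_rpow_mul_surfMod_rpow_le (h : DoublingPoincare μ M C k) (hα : IsGenerator x₀ α₀)
    (hf : DegOneLip x₀ α₀ f) {p : ℝ} (hp : 1 < p) (hcap : cap μ p x₀ α₀ ≠ 0) :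
    cap μ p x₀ α₀ ^ (1 / p) * surfMod μ (p / (p - 1)) x₀ α₀ ^ (1 / (p / (p - 1))) ≤
      ENNReal.ofReal (48 * C * M ^ 8 * M ^ (k + 7) * M ^ (k + 3)) := by
  have := h.finite
  have hM := h.one_le
  have hC := h.nonneg
  have hp1 : 0 < p - 1 := by linarith
  have hp0 : 0 < p := by linarith
  have hcap_top : cap μ p x₀ α₀ ≠ ⊤ := (cap_lt_top hp0 hf).ne
  have hc0 : 0 < (cap μ p x₀ α₀).toReal := ENNReal.toReal_pos hcap hcap_top
  have hsurf := h.surfMod_le hα hf hp hcap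
  rw [← ENNReal.ofReal_toReal hcap_top]
  set c := (cap μ p x₀ α₀).toReal
  set q := p / (p - 1) with hq
  set D := 48 * C * M ^ 8 * M ^ (k + 7)
  have hq0 : 0 < q := by positivity
  have hq1 : 1 ≤ q := (one_le_div hp1).2 (by linarith)
  have hD0 : 0 ≤ D := by positivity
  have hroot : (D ^ q * M ^ (k + 3) * c ^ (1 - q)) ^ (1 / q) =
      D * (M ^ (k + 3)) ^ (1 / q) * (c ^ (1 / p))⁻¹ := by
    rw [Real.mul_rpow (by positivity) (by positivity), Real.mul_rpow (by positivity)
      (by positivity), ← Real.rpow_mul hD0, ← Real.rpow_mul hc0.le, mul_one_div_cancel hq0.ne',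
      Real.rpow_one, show (1 - q) * (1 / q) = -(1 / p) by rw [hq]; field_simp; ring,
      Real.rpow_neg hc0.le]
  calc ENNReal.ofReal c ^ (1 / p) * surfMod μ q x₀ α₀ ^ (1 / q)
      ≤ ENNReal.ofReal c ^ (1 / p) *
          ENNReal.ofReal (D ^ q * M ^ (k + 3) * c ^ (1 - q)) ^ (1 / q) := by gcongr
    _ = ENNReal.ofReal (c ^ (1 / p) * (D * (M ^ (k + 3)) ^ (1 / q) * (c ^ (1 / p))⁻¹)) := by
        rw [ENNReal.ofReal_rpow_of_nonneg hc0.le (by positivity),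
          ENNReal.ofReal_rpow_of_nonneg (by positivity) (by positivity),
          ← ENNReal.ofReal_mul (by positivity), hroot]
    _ = ENNReal.ofReal (D * (M ^ (k + 3)) ^ (1 / q)) := by
        congr 1
        field_simp
    _ ≤ ENNReal.ofReal (D * M ^ (k + 3)) := by
        gcongr
        exact Real.rpow_le_self_of_one_le (one_le_pow₀ hM) ((div_le_one hq0).2 hq1)

end DoublingPoincare

end Duality

open Duality in
theorem statement2_general (Cμ : ℝ≥0∞) (CP lP : ℝ) :
    ∃ C : ℝ≥0∞, 0 < C ∧ C < ⊤ ∧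
      ∀ (T : Type*) [MetricSpace T] [MeasurableSpace T] [BorelSpace T] [CompactSpace T]
        (μ : Measure T) (x₀ : T) (α₀ : Path x₀ x₀),
        IsDoubling μ Cμ → SupportsPoincare μ CP lP → IsGenerator x₀ α₀ →
        (∃ f : T → UnitAddCircle, DegOneLip x₀ α₀ f) →
        ∀ p : ℝ, 1 < p →
          (surfMod μ (p / (p - 1)) x₀ α₀ < ⊤ →
            cap μ p x₀ α₀ ^ (1 / p) *
                surfMod μ (p / (p - 1)) x₀ α₀ ^ (1 / (p / (p - 1))) ≤ C) ∧
          (surfMod μ (p / (p - 1)) x₀ α₀ = ⊤ → cap μ p x₀ α₀ = 0) := by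
  obtain ⟨k, hk⟩ := pow_unbounded_of_one_lt (max lP lP⁻¹) one_lt_two
  set M := max 1 Cμ.toReal
  set C := max CP 0 * 2 * M ^ k
  refine ⟨ENNReal.ofReal (48 * C * M ^ 8 * M ^ (k + 7) * M ^ (k + 3)) + 1, by simp,
    ENNReal.add_lt_top.2 ⟨ENNReal.ofReal_lt_top, ENNReal.one_lt_top⟩, ?_⟩
  rintro T _ _ _ _ μ x₀ α₀ hD hP hα ⟨f, hf⟩ p hp
  have h : DoublingPoincare μ M C k :=
    doublingPoincare_of_isDoubling hD hP (diam_pos_of_isGenerator hα) hk.le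
  refine ⟨fun _ => ?_, fun htop => ?_⟩
  · rcases eq_or_ne (cap μ p x₀ α₀) 0 with hcap | hcap
    · rw [hcap, ENNReal.zero_rpow_of_pos (by positivity), zero_mul]
      exact zero_le
    · exact (h.cap_rpow_mul_surfMod_rpow_le hα hf hp hcap).trans le_self_add
  · by_contra hcap
    exact ENNReal.ofReal_ne_top (top_le_iff.1 (htop.ge.trans (h.surfMod_le hα hf hp hcap)))

open Duality in
/-- **Theorem 2.3 (upper bound).** -/
theorem statement2 (Cμ : ℝ≥0∞) (CP lP : ℝ) :
    ∃ C : ℝ≥0∞, 0 < C ∧ C < ⊤ ∧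
      ∀ (T : Type) [MetricSpace T] [MeasurableSpace T] [BorelSpace T] [CompactSpace T]
        (μ : Measure T) (x₀ : T) (α₀ : Path x₀ x₀),
        Standing μ Cμ CP lP x₀ α₀ →
        ∀ p : ℝ, 1 < p →
          (surfMod μ (p / (p - 1)) x₀ α₀ < ⊤ →
            cap μ p x₀ α₀ ^ (1 / p) *
                surfMod μ (p / (p - 1)) x₀ α₀ ^ (1 / (p / (p - 1))) ≤ C) ∧
          (surfMod μ (p / (p - 1)) x₀ α₀ = ⊤ → cap μ p x₀ α₀ = 0) := by
  obtain ⟨C, hC0, hC, H⟩ := statement2_general Cμ CP lP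
  exact ⟨C, hC0, hC, fun T _ _ _ _ μ x₀ α₀ ⟨hD, hP, _, hα, hf⟩ => H T μ x₀ α₀ hD hP hα hf⟩
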